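/- arXiv:2006.11869 — 3 statements merged into one kernel-verified Lean document; each statement's English description precedes it below -/
import Mathlib

section
/- Let d ≥ 1 and let P be a class of finite simple graphs of maximum degree at most d that is monotone (closed under taking subgraphs) and hyperfinite. Then for every ε > 0 there exist an integer N ≥ 1, a finite set Q, an integer s ≥ 1 and a Q-verifier 𝒞 of local horizon s such that every G ∈ P admits a Q-proof accepted by 𝒞, and every finite simple graph of maximum degree at most d admitting a Q-proof accepted by 𝒞 is (ε,K)-hyperfinite for every K ≥ N. -/
/-!
The proof attached to a graph is a family of vertex sets `A j`, `j ∈ ι`, with `ι` finite of size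
independent of the graph: the vertex `x` is labelled by the set of `j` with `x ∈ A j`. The verifier
(`spreadVerifier`) checks that every `x` lies in some `A j`, that a neighbour of `x` misses at most
a `1/q` fraction of the sets containing `x`, and that the components of every `A j` have bounded
radius.

*Soundness* (`exists_index_choice`, `isHyperfinite_of_accepts`). By averaging over `j`, every
nonempty vertex set `U` meets some `A j` in a set whose boundary inside `U` has at most
`(d/q)|A j ∩ U|` edges. Removing `A j ∩ U` from `U` and iterating assigns to each vertex an index
`φ x` with `x ∈ A (φ x)`, such that at most `(2d/q)|V|` edges join vertices of different index.
Once these edges are deleted, each component lies in a component of a single `A j`.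

*Completeness* has three steps.

* Weighted hyperfiniteness (`exists_weighted_separator`): for every positive vertex weight, a graph
  of the class falls into pieces of bounded radius after the removal of vertices of total weight at
  most `δ` times the whole. The weight may be assumed to vary by a factor at most `2d` along edges
  (`exists_smooth_weight`). Removing the vertices whose logarithmic weight lies in a suitable
  residue class modulo `m` separates the graph into bands in each of which weights are comparable,
  so ordinary hyperfiniteness applies to the subgraphs induced on the bands; this is where
  monotonicity enters.
* Multiplicative weights (`exists_balanced_sequence`): consequently there are separators
  `Y 1, ..., Y N` such that each vertex lies in at most `3δN` of them. Here `N` depends on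
  the graph.
* Rounding (`exists_accepted_proof`): send `x` to a chosen vertex of its piece of the complement of
  `Y i`, and let `i` be uniformly random. The law of the image of `x` lives on a ball of bounded
  radius and changes little along edges. Rounded to multiples of `1/M`, it becomes a function
  `F x` with values in `{0, ..., M}`, and its superlevel sets `{x | t < F x z}`, merged over all
  vertices `z` of the same colour in a colouring that separates nearby vertices, are the required
  sets `A (k, t)`.
-/

open scoped Classical symmDiff

noncomputable section

/-- The closed ball of radius `r` around `x` in the graph `G`. -/
def ballSet {V : Type*} (G : SimpleGraph V) (r : ℕ) (x : V) : Set V :=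
  {z | G.edist x z ≤ r}

lemma self_mem_ballSet {V : Type*} (G : SimpleGraph V) (r : ℕ) (x : V) :
    x ∈ ballSet G r x := by
  simp [ballSet]

/-- `G` has maximum degree at most `d`. -/
def DegLE {V : Type*} (G : SimpleGraph V) (d : ℕ) : Prop :=
  ∀ v, (G.neighborSet v).ncard ≤ d

/-- `N^d_r`: the maximum number of vertices of a ball of radius `r`
in a graph of maximum degree at most `d`. -/
def ballBound (d r : ℕ) : ℕ :=
  sSup {n | ∃ (W : Type) (_ : Fintype W) (G : SimpleGraph W) (x : W),
    DegLE G d ∧ n = (ballSet G r x).ncard}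

/-- A `Q`-verifier: a predicate on rooted `Q`-labelled finite graphs. -/
def Verifier (Q : Type) : Type 1 :=
  ∀ (B : Type) [Fintype B], SimpleGraph B → B → (B → Q) → Prop

/-- Invariance of a verifier under root- and label-preserving isomorphisms. -/
def Verifier.Inv {Q : Type} (𝒱 : Verifier Q) : Prop :=
  ∀ (B B' : Type) [Fintype B] [Fintype B'] (G : SimpleGraph B) (G' : SimpleGraph B')
    (φ : G ≃g G') (b : B) (ℓ' : B' → Q),
    𝒱 B G b (ℓ' ∘ φ) ↔ 𝒱 B' G' (φ b) ℓ'

/-- The verifier `𝒱` of local horizon `r` accepts the proof `T` on `G`: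
for every vertex `x`, the `r`-neighbourhood of `x`, rooted at `x` and labelled by
(the restriction of) `T`, satisfies `𝒱`. -/
def Accepts {Q V : Type} [Fintype V] (𝒱 : Verifier Q) (r : ℕ)
    (G : SimpleGraph V) (T : V → Q) : Prop :=
  ∀ x : V, 𝒱 ↥(ballSet G r x) (G.induce (ballSet G r x))
    ⟨x, self_mem_ballSet G r x⟩ (fun z => T z.1)

/-- `G` is `(ε,K)`-hyperfinite. -/
def IsHyperfinite {V : Type*} [Fintype V] (G : SimpleGraph V) (ε : ℝ) (K : ℕ) : Prop :=
  ∃ W ⊆ G.edgeSet, (W.ncard : ℝ) ≤ ε * (Nat.card V : ℝ) ∧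
    ∀ v : V, (((G.deleteEdges W).connectedComponentMk v).supp).ncard ≤ K

/-- `G` is `(ε,r)`-uniform. -/
def IsUniform {V : Type*} [Fintype V] (G : SimpleGraph V) (ε : ℝ) (r : ℕ) : Prop :=
  ∃ f : V → V → ℝ,
    (∀ x z, 0 ≤ f x z) ∧
    (∀ x, ∑ z, f x z = 1) ∧
    (∀ x y, G.Adj x y → ∑ z, |f x z - f y z| < ε) ∧
    (∀ x z, (r : ℕ∞) < G.edist x z → f x z = 0)

/-- A class of finite simple graphs. -/
def GraphClass : Type 1 := ∀ (V : Type) [Fintype V], SimpleGraph V → Prop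

/-- `P` is monotone: closed under taking subgraphs. -/
def GraphClass.Mono (P : GraphClass) : Prop :=
  ∀ (V W : Type) [Fintype V] [Fintype W] (G : SimpleGraph V) (H : SimpleGraph W)
    (f : W ↪ V), (∀ a b, H.Adj a b → G.Adj (f a) (f b)) → P V G → P W H

/-- `P` is closed under taking disjoint unions. -/
def GraphClass.ClosedUnderDisjUnion (P : GraphClass) : Prop :=
  ∀ (V W : Type) [Fintype V] [Fintype W] (G : SimpleGraph V) (H : SimpleGraph W),
    P V G → P W H → P (V ⊕ W) (G ⊕g H)

/-- `P` is hyperfinite. -/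
def GraphClass.Hyperfinite (P : GraphClass) : Prop :=
  ∀ ε : ℝ, 0 < ε → ∃ K : ℕ, 1 ≤ K ∧
    ∀ (V : Type) [Fintype V] (G : SimpleGraph V), P V G → IsHyperfinite G ε K

/-- The inner vertex boundary of `L` inside the subgraph of `G` induced on `S`:
vertices of `L` having a neighbour in `S \ L`. -/
def innerBoundary {V : Type*} (G : SimpleGraph V) (S L : Set V) : Set V :=
  {x ∈ L | ∃ y ∈ S \ L, G.Adj x y}

/-- The edge boundary of `L` in `F`: edges of `F` with exactly one endpoint in `L`. -/
def edgeBoundary {V : Type*} (F : SimpleGraph V) (L : Set V) : Set (Sym2 V) :=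
  {e ∈ F.edgeSet | ∃ x ∈ L, ∃ y ∉ L, e = s(x, y)}

/-- `Y` is a `K`-separator of `G`. -/
def IsSeparator {V : Type*} (G : SimpleGraph V) (K : ℕ) (Y : Set V) : Prop :=
  ∀ v : ↥(Yᶜ), ((((G.induce Yᶜ)).connectedComponentMk v).supp).ncard ≤ K


/-! ### Balls in graphs of bounded degree -/

lemma edist_hom_le {V W : Type*} {G : SimpleGraph V} {H : SimpleGraph W} (f : G →g H) (a b : V) :
    H.edist (f a) (f b) ≤ G.edist a b := by
  by_cases h : G.edist a b = ⊤
  · simp [h]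
  · obtain ⟨p, hp⟩ := SimpleGraph.exists_walk_of_edist_ne_top h
    rw [← hp, ← SimpleGraph.Walk.length_map f p]
    exact SimpleGraph.edist_le _

/-- Passing to the subgraph induced on a ball around `x` does not change distances from `x`. -/
lemma ball_induce_edist_le {V : Type*} {G : SimpleGraph V} {r t : ℕ} (htr : t ≤ r) {x z : V}
    (h : G.edist x z ≤ t) (hz : z ∈ ballSet G r x) :
    (G.induce (ballSet G r x)).edist ⟨x, self_mem_ballSet G r x⟩ ⟨z, hz⟩ ≤ t := by
  obtain ⟨p, hp⟩ := SimpleGraph.exists_walk_of_edist_ne_top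
    (ne_top_of_le_ne_top (ENat.natCast_ne_top t) h)
  have hlen : p.length ≤ t := by rw [← hp] at h; exact_mod_cast h
  have hs : ∀ y ∈ p.support, y ∈ ballSet G r x := by
    intro y hy
    have h1 := SimpleGraph.edist_le (p.takeUntil y hy)
    have h2 := p.length_takeUntil_le_length hy
    refine h1.trans ?_
    exact_mod_cast h2.trans (hlen.trans htr)
  refine (SimpleGraph.edist_le (p.induce _ hs)).trans ?_
  have : (p.induce _ hs).length = p.length := by
    have := congrArg SimpleGraph.Walk.length (SimpleGraph.Walk.map_induce p hs)
    rwa [SimpleGraph.Walk.length_map] at this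
  rw [this]; exact_mod_cast hlen

lemma card_filter_adj_le {V : Type*} [Fintype V] {G : SimpleGraph V} {d : ℕ} (hG : DegLE G d)
    (x : V) : (Finset.univ.filter (fun y => G.Adj x y)).card ≤ d := by
  have := hG x
  rw [← Set.ncard_coe_finset]
  convert this using 2
  ext y; simp

lemma ballSet_ncard_le {V : Type*} [Fintype V] {G : SimpleGraph V} {d : ℕ} (hG : DegLE G d)
    (r : ℕ) (x : V) : (ballSet G r x).ncard ≤ (d + 1) ^ r := by
  induction r with
  | zero =>
    have : ballSet G 0 x = {x} := by
      ext z
      change G.edist x z ≤ ((0 : ℕ) : ℕ∞) ↔ z = x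
      rw [Nat.cast_zero, nonpos_iff_eq_zero, SimpleGraph.edist_eq_zero_iff, eq_comm]
    simp [this]
  | succ r ih =>
    have hsub : ballSet G (r + 1) x ⊆ ↑((ballSet G r x).toFinset.biUnion
        (fun y => insert y (Finset.univ.filter (fun z => G.Adj y z)))) := by
      intro z hz
      have hz' : G.edist x z ≤ ((r + 1 : ℕ) : ℕ∞) := hz
      obtain ⟨p, hp⟩ := SimpleGraph.exists_walk_of_edist_ne_top
        (ne_top_of_le_ne_top (ENat.natCast_ne_top _) hz')
      rw [← hp] at hz'
      have hlen : p.reverse.length ≤ r + 1 := by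
        rw [SimpleGraph.Walk.length_reverse]; exact_mod_cast hz'
      simp only [Finset.coe_biUnion, Set.mem_iUnion, Finset.mem_coe, Set.mem_toFinset,
        Finset.mem_insert, Finset.mem_filter, Finset.mem_univ, true_and]
      cases hq : p.reverse with
      | nil => exact ⟨_, self_mem_ballSet G r _, Or.inl rfl⟩
      | cons h q =>
        rw [hq, SimpleGraph.Walk.length_cons] at hlen
        refine ⟨_, ?_, Or.inr h.symm⟩
        refine (SimpleGraph.edist_le q.reverse).trans ?_
        rw [SimpleGraph.Walk.length_reverse]
        exact_mod_cast (by omega)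
    calc (ballSet G (r + 1) x).ncard
        ≤ _ := Set.ncard_le_ncard hsub (Finset.finite_toSet _)
      _ = _ := Set.ncard_coe_finset _
      _ ≤ (ballSet G r x).toFinset.card * (d + 1) := by
          refine Finset.card_biUnion_le_card_mul _ _ _ fun y _ => ?_
          exact (Finset.card_insert_le _ _).trans
            (Nat.add_le_add_right (card_filter_adj_le hG y) 1)
      _ ≤ (d + 1) ^ (r + 1) := by
          rw [pow_succ, ← Set.ncard_eq_toFinset_card']
          exact Nat.mul_le_mul_right _ ih

/-- Greedy colouring of the `t`-th power of a bounded degree graph: two distinct vertices at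
distance at most `t` receive different colours. -/
lemma exists_distance_coloring {V : Type*} [Fintype V] {G : SimpleGraph V} {d : ℕ}
    (hG : DegLE G d) (t : ℕ) :
    ∃ c : V → Fin ((d + 1) ^ t), ∀ x y, G.edist x y ≤ t → c x = c y → x = y := by
  suffices h : ∀ U : Finset V, ∃ c : V → Fin ((d + 1) ^ t),
      ∀ x ∈ U, ∀ y ∈ U, G.edist x y ≤ t → c x = c y → x = y by
    obtain ⟨c, hc⟩ := h Finset.univ
    exact ⟨c, fun x y => hc x (Finset.mem_univ _) y (Finset.mem_univ _)⟩
  intro U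
  induction U using Finset.induction_on with
  | empty => exact ⟨fun _ => ⟨0, by positivity⟩, by simp⟩
  | insert a U ha ih =>
    obtain ⟨c, hc⟩ := ih
    have hcard : (((ballSet G t a).toFinset.erase a).image c).card < (d + 1) ^ t := by
      refine Finset.card_image_le.trans_lt ?_
      refine (Finset.card_erase_lt_of_mem (by simpa using self_mem_ballSet G t a)).trans_le ?_
      rw [← Set.ncard_eq_toFinset_card']
      exact ballSet_ncard_le hG t a
    obtain ⟨k, hk⟩ : ∃ k, k ∉ ((ballSet G t a).toFinset.erase a).image c := by
      by_contra! hcon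
      have : ((ballSet G t a).toFinset.erase a).image c = Finset.univ := by
        ext k; simp only [Finset.mem_univ, iff_true]; exact hcon k
      rw [this] at hcard
      simp at hcard
    have hk' : ∀ y, y ≠ a → G.edist a y ≤ t → c y ≠ k := by
      intro y hy hd he
      exact hk (Finset.mem_image.2 ⟨y, Finset.mem_erase.2 ⟨hy, Set.mem_toFinset.2 hd⟩, he⟩)
    refine ⟨Function.update c a k, ?_⟩
    intro x hx y hy hd he
    by_cases hxa : x = a <;> by_cases hya : y = a
    · rw [hxa, hya]
    · subst hxa
      rw [Function.update_self, Function.update_of_ne hya] at he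
      exact absurd he.symm (hk' y hya hd)
    · subst hya
      rw [Function.update_self, Function.update_of_ne hxa] at he
      rw [SimpleGraph.edist_comm] at hd
      exact absurd he (hk' x hxa hd)
    · rw [Function.update_of_ne hxa, Function.update_of_ne hya] at he
      exact hc x (Finset.mem_of_mem_insert_of_ne hx hxa) y
        (Finset.mem_of_mem_insert_of_ne hy hya) hd he

/-! ### Weighted hyperfiniteness -/

/-- Every vertex set `S` of a graph in a monotone `(ε,K)`-hyperfinite class can be cut into pieces
of radius at most `K` by removing at most `ε|S|` vertices; the pieces are recorded by the map `ρ`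
sending a vertex to a chosen vertex of its piece. -/
lemma exists_separator_of_hyperfinite {P : GraphClass} (hmono : P.Mono) {ε : ℝ} {K : ℕ}
    (hK : ∀ (V : Type) [Fintype V] (G : SimpleGraph V), P V G → IsHyperfinite G ε K)
    {V : Type} [Fintype V] {G : SimpleGraph V} (hG : P V G) (S : Finset V) :
    ∃ (Y : Finset V) (ρ : V → V), Y ⊆ S ∧ (Y.card : ℝ) ≤ ε * S.card ∧
      (∀ x ∈ S, ∀ y ∈ S, x ∉ Y → y ∉ Y → G.Adj x y → ρ x = ρ y) ∧
      ∀ x, G.edist x (ρ x) ≤ K := by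
  set H : SimpleGraph S := G.comap (Subtype.val : S → V) with hH
  have hPH : P S H := hmono V S G H ⟨Subtype.val, Subtype.val_injective⟩ (fun a b h => h) hG
  obtain ⟨W, hWs, hWc, hcomp⟩ := hK S H hPH
  set H' := H.deleteEdges W with hHW
  -- deleting one endpoint of every edge of `W` separates at least as well as deleting `W`
  let Y' : Finset S := W.toFinset.image (fun e => (Quot.out e).1)
  have hY' : ∀ x y : S, x ∉ Y' → y ∉ Y' → H.Adj x y → H'.Adj x y := by
    intro x y hx hy h
    refine SimpleGraph.deleteEdges_adj.2 ⟨h, fun hW => ?_⟩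
    have h1 : (Quot.out s(x, y)).1 ∈ Y' :=
      Finset.mem_image.2 ⟨s(x, y), Set.mem_toFinset.2 hW, rfl⟩
    have h2 : (Quot.out s(x, y)).1 ∈ s(x, y) := Sym2.out_fst_mem _
    rcases Sym2.mem_iff.1 h2 with h3 | h3
    · exact hx (h3 ▸ h1)
    · exact hy (h3 ▸ h1)
  let rep : S → S := fun x => Quot.out (H'.connectedComponentMk x)
  have hrep : ∀ x, H'.connectedComponentMk (rep x) = H'.connectedComponentMk x :=
    fun x => Quot.out_eq _
  have hdist : ∀ x, G.edist x.1 (rep x).1 ≤ K := by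
    intro x
    obtain ⟨p, hp⟩ := (SimpleGraph.ConnectedComponent.exact (hrep x).symm).exists_isPath
    have hlen : p.length + 1 ≤ K := by
      rw [← SimpleGraph.Walk.length_support, ← List.toFinset_card_of_nodup hp.support_nodup,
        ← Set.ncard_coe_finset]
      refine le_trans (Set.ncard_le_ncard ?_ (Set.toFinite _)) (hcomp x)
      intro y hy
      rw [Finset.mem_coe, List.mem_toFinset] at hy
      exact SimpleGraph.ConnectedComponent.sound ⟨(p.takeUntil y hy).reverse⟩
    let f : H' →g G := ⟨Subtype.val, fun {a b} h => (SimpleGraph.deleteEdges_adj.1 h).1⟩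
    refine (edist_hom_le f x (rep x)).trans ((SimpleGraph.edist_le p).trans ?_)
    exact_mod_cast (Nat.le_succ _).trans hlen
  refine ⟨Y'.map ⟨Subtype.val, Subtype.val_injective⟩,
    fun x => if h : x ∈ S then (rep ⟨x, h⟩).1 else x, ?_, ?_, ?_, ?_⟩
  · intro x hx
    obtain ⟨y, -, rfl⟩ := Finset.mem_map.1 hx
    exact y.2
  · rw [Finset.card_map]
    have h1 : Y'.card ≤ W.ncard := by
      rw [Set.ncard_eq_toFinset_card']
      exact Finset.card_image_le
    have h2 : (Nat.card S : ℝ) = S.card := by simp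
    rw [h2] at hWc
    exact le_trans (by exact_mod_cast h1) hWc
  · intro x hx y hy hxY hyY hadj
    have hx' : (⟨x, hx⟩ : S) ∉ Y' := fun h => hxY (Finset.mem_map.2 ⟨_, h, rfl⟩)
    have hy' : (⟨y, hy⟩ : S) ∉ Y' := fun h => hyY (Finset.mem_map.2 ⟨_, h, rfl⟩)
    have h := hY' ⟨x, hx⟩ ⟨y, hy⟩ hx' hy' hadj
    have h2 : H'.connectedComponentMk ⟨x, hx⟩ = H'.connectedComponentMk ⟨y, hy⟩ :=
      SimpleGraph.ConnectedComponent.sound h.reachable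
    simp only [hx, hy, dif_pos, rep, h2]
  · intro x
    by_cases hx : x ∈ S
    · simp only [hx, dif_pos]; exact hdist ⟨x, hx⟩
    · simp [hx]

/-- Minimum principle for the operator `u ↦ u - (2d)⁻¹ A u`, with `A` the adjacency operator. -/
lemma nonneg_of_neighbour_sum_le {V : Type*} [Fintype V] {G : SimpleGraph V} {d : ℕ} (hd : 1 ≤ d)
    (hG : DegLE G d) (u : V → ℝ)
    (h : ∀ x, (2 * d : ℝ)⁻¹ * ∑ y with G.Adj x y, u y ≤ u x) : ∀ x, 0 ≤ u x := by
  intro x₀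
  obtain ⟨x, -, hx⟩ := Finset.exists_min_image Finset.univ u ⟨x₀, Finset.mem_univ _⟩
  refine le_trans ?_ (hx x₀ (Finset.mem_univ _))
  by_contra! hneg
  have hd' : (1 : ℝ) ≤ d := by exact_mod_cast hd
  have h1 : (Finset.univ.filter (fun y => G.Adj x y)).card • u x ≤ ∑ y with G.Adj x y, u y :=
    Finset.card_nsmul_le_sum _ _ _ fun y _ => hx y (Finset.mem_univ _)
  have h2 : ((Finset.univ.filter (fun y => G.Adj x y)).card : ℝ) ≤ d := by
    exact_mod_cast card_filter_adj_le hG x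
  rw [nsmul_eq_mul] at h1
  have h3 : d * u x ≤ ∑ y with G.Adj x y, u y := by nlinarith
  have h4 : (2 * d : ℝ)⁻¹ * (d * u x) ≤ u x :=
    (mul_le_mul_of_nonneg_left h3 (by positivity)).trans (h x)
  have h5 : (2 * d : ℝ)⁻¹ * (d * u x) = u x / 2 := by field_simp
  linarith

/-- Smoothing of weights: any positive weight is dominated by one of at most twice the total which
varies by a factor at most `2d` along edges. It solves `u = w + (2d)⁻¹ A u`, with `A` the
adjacency operator. -/
lemma exists_smooth_weight {V : Type*} [Fintype V] {G : SimpleGraph V} {d : ℕ} (hd : 1 ≤ d)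
    (hG : DegLE G d) (w : V → ℝ) (hw : ∀ x, 0 < w x) :
    ∃ u : V → ℝ, (∀ x, w x ≤ u x) ∧ (∀ x y, G.Adj x y → u y ≤ 2 * d * u x) ∧
      ∑ x, u x ≤ 2 * ∑ x, w x := by
  have hd' : (1 : ℝ) ≤ d := by exact_mod_cast hd
  let Φ : (V → ℝ) →ₗ[ℝ] (V → ℝ) :=
    { toFun := fun u x => u x - (2 * d : ℝ)⁻¹ * ∑ y with G.Adj x y, u y
      map_add' := by
        intro u v; ext x; simp only [Pi.add_apply, Finset.sum_add_distrib]; ring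
      map_smul' := by
        intro a u; ext x
        simp only [Pi.smul_apply, smul_eq_mul, ← Finset.mul_sum, RingHom.id_apply]; ring }
  have hΦ : ∀ u x, Φ u x = u x - (2 * d : ℝ)⁻¹ * ∑ y with G.Adj x y, u y := fun _ _ => rfl
  have hinj : Function.Injective Φ := by
    rw [← LinearMap.ker_eq_bot, LinearMap.ker_eq_bot']
    intro u hu
    have h0 : ∀ x, u x - (2 * d : ℝ)⁻¹ * ∑ y with G.Adj x y, u y = 0 := by
      intro x; rw [← hΦ, hu]; rfl
    have h1 := nonneg_of_neighbour_sum_le hd hG u (fun x => by linarith [h0 x])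
    have h2 := nonneg_of_neighbour_sum_le hd hG (fun x => - u x) (fun x => by
      rw [Finset.sum_neg_distrib]; linarith [h0 x])
    ext x; exact le_antisymm (by simpa using h2 x) (h1 x)
  obtain ⟨u, hu⟩ := LinearMap.injective_iff_surjective.1 hinj w
  have hu' : ∀ x, u x = w x + (2 * d : ℝ)⁻¹ * ∑ y with G.Adj x y, u y := by
    intro x; rw [← hu, hΦ]; ring
  have hpos := nonneg_of_neighbour_sum_le hd hG u (fun x => by linarith [hu' x, hw x])
  refine ⟨u, fun x => ?_, fun x y hxy => ?_, ?_⟩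
  · rw [hu' x]
    have : 0 ≤ (2 * d : ℝ)⁻¹ * ∑ y with G.Adj x y, u y :=
      mul_nonneg (by positivity) (Finset.sum_nonneg fun y _ => hpos y)
    linarith
  · have h1 : u y ≤ ∑ y with G.Adj x y, u y :=
      Finset.single_le_sum (f := u) (fun z _ => hpos z) (by simp [hxy])
    have h2 : (2 * d : ℝ)⁻¹ * u y ≤ u x := by
      have := mul_le_mul_of_nonneg_left h1 (by positivity : (0 : ℝ) ≤ (2 * d : ℝ)⁻¹)
      linarith [hu' x, hw x]
    calc u y = 2 * d * ((2 * d : ℝ)⁻¹ * u y) := by field_simp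
      _ ≤ 2 * d * u x := mul_le_mul_of_nonneg_left h2 (by positivity)
  · have h1 : ∑ x, ∑ y with G.Adj x y, u y ≤ d * ∑ y, u y := by
      simp_rw [Finset.sum_filter]
      rw [Finset.sum_comm, Finset.mul_sum]
      refine Finset.sum_le_sum fun y _ => ?_
      rw [← Finset.sum_filter, Finset.sum_const, nsmul_eq_mul]
      refine mul_le_mul_of_nonneg_right ?_ (hpos y)
      have := card_filter_adj_le hG y
      simp_rw [G.adj_comm y] at this
      exact_mod_cast this
    have h2 : ∑ x, u x = ∑ x, w x + (2 * d : ℝ)⁻¹ * ∑ x, ∑ y with G.Adj x y, u y := by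
      rw [Finset.mul_sum, ← Finset.sum_add_distrib]
      exact Finset.sum_congr rfl fun x _ => hu' x
    have h3 : (2 * d : ℝ)⁻¹ * ∑ x, ∑ y with G.Adj x y, u y ≤ (2 * d : ℝ)⁻¹ * (d * ∑ y, u y) :=
      mul_le_mul_of_nonneg_left h1 (by positivity)
    have h4 : (2 * d : ℝ)⁻¹ * (d * ∑ y, u y) = (∑ y, u y) / 2 := by field_simp
    linarith

lemma ediv_eq_of_close {m a b : ℤ} (hm : 0 < m) (ha : a % m ≠ 0) (hb : b % m ≠ 0)
    (h1 : a ≤ b + 1) (h2 : b ≤ a + 1) : a / m = b / m := by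
  have ea := Int.mul_ediv_add_emod a m
  have eb := Int.mul_ediv_add_emod b m
  have := Int.emod_nonneg a hm.ne'
  have := Int.emod_nonneg b hm.ne'
  have := Int.emod_lt_of_pos a hm
  have := Int.emod_lt_of_pos b hm
  have ha' : 1 ≤ a % m := by omega
  have hb' : 1 ≤ b % m := by omega
  rcases lt_trichotomy (a / m) (b / m) with h | h | h
  · have : m * (a / m + 1) ≤ m * (b / m) := mul_le_mul_of_nonneg_left h hm.le
    rw [mul_add] at this; omega
  · exact h
  · have : m * (b / m + 1) ≤ m * (a / m) := mul_le_mul_of_nonneg_left h hm.le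
    rw [mul_add] at this; omega

/-- Weighted hyperfiniteness: in a monotone hyperfinite class the removed vertices can be chosen
to have small weight, with respect to any positive weight. -/
lemma exists_weighted_separator {d : ℕ} (hd : 1 ≤ d) {P : GraphClass}
    (hPdeg : ∀ (V : Type) [Fintype V] (G : SimpleGraph V), P V G → DegLE G d)
    (hmono : P.Mono) (hhyp : P.Hyperfinite) {δ : ℝ} (hδ : 0 < δ) :
    ∃ r : ℕ, ∀ (V : Type) [Fintype V] (G : SimpleGraph V), P V G →
      ∀ w : V → ℝ, (∀ x, 0 < w x) → ∃ (Y : Finset V) (ρ : V → V),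
        ∑ x ∈ Y, w x ≤ δ * ∑ x, w x ∧
        (∀ x y, x ∉ Y → y ∉ Y → G.Adj x y → ρ x = ρ y) ∧ ∀ x, G.edist x (ρ x) ≤ r := by
  obtain ⟨m, hm⟩ := exists_nat_gt (4 / δ)
  have hm0' : (0 : ℝ) < m := lt_trans (by positivity) hm
  have hm0 : 0 < m := by exact_mod_cast hm0'
  set b : ℕ := 2 * d with hb
  have hb1 : 1 < b := by omega
  have hb0 : (0 : ℝ) < b := by exact_mod_cast (by omega : 0 < b)
  set ε₁ : ℝ := δ / (4 * (b : ℝ) ^ m) with hε₁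
  have hε₁0 : 0 < ε₁ := by positivity
  obtain ⟨K, -, hK⟩ := hhyp ε₁ hε₁0
  refine ⟨K, fun V _ G hG w hw => ?_⟩
  obtain ⟨u, hwu, hedge, htot⟩ := exists_smooth_weight hd (hPdeg V G hG) w hw
  have hu0 : ∀ x, 0 < u x := fun x => (hw x).trans_le (hwu x)
  -- level of a vertex: the logarithm in base `2d` of its weight, which is 1-Lipschitz
  let h : V → ℤ := fun x => Int.log b (u x)
  have hlo : ∀ x, (b : ℝ) ^ h x ≤ u x := fun x => Int.zpow_log_le_self hb1 (hu0 x)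
  have hhi : ∀ x, u x < (b : ℝ) ^ (h x + 1) := fun x => Int.lt_zpow_succ_log_self hb1 _
  have hlip : ∀ x y, G.Adj x y → h y ≤ h x + 1 := by
    intro x y hxy
    have h1 : (b : ℝ) ^ h y < (b : ℝ) ^ (h x + 1 + 1) := by
      calc (b : ℝ) ^ h y ≤ u y := hlo y
        _ ≤ b * u x := by have := hedge x y hxy; rw [hb]; push_cast; exact this
        _ < b * (b : ℝ) ^ (h x + 1) := mul_lt_mul_of_pos_left (hhi x) hb0
        _ = _ := by rw [zpow_add_one₀ hb0.ne' (h x + 1), mul_comm]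
    have := (zpow_lt_zpow_iff_right₀ (by exact_mod_cast hb1 : (1 : ℝ) < b)).1 h1
    omega
  -- the levels in one residue class modulo `m` carry at most a `1/m` fraction of the weight
  obtain ⟨a, ham, ha⟩ : ∃ a ∈ Finset.Ico (0 : ℤ) m,
      ∑ x with h x % m = a, u x ≤ (∑ x, u x) / m := by
    refine Finset.exists_sum_fiber_le_of_maps_to_of_sum_le_nsmul (fun x _ => ?_) ?_ ?_
    · exact Finset.mem_Ico.2 ⟨Int.emod_nonneg _ (by omega), Int.emod_lt_of_pos _ (by omega)⟩
    · exact ⟨0, Finset.mem_Ico.2 ⟨le_rfl, by omega⟩⟩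
    · rw [Int.card_Ico, nsmul_eq_mul]
      simp only [sub_zero, Int.toNat_natCast]
      rw [mul_div_cancel₀ _ hm0'.ne']
  let band : V → ℤ := fun x => (h x - a) / m
  have hband : ∀ x, a + m * band x ≤ h x ∧ h x + 1 ≤ a + m * band x + m := by
    intro x
    have e := Int.mul_ediv_add_emod (h x - a) m
    have := Int.emod_nonneg (h x - a) (by omega : (m : ℤ) ≠ 0)
    have := Int.emod_lt_of_pos (h x - a) (by omega : (0 : ℤ) < m)
    change _ + _ * ((h x - a) / m) ≤ _ ∧ _ ≤ _ + _ * ((h x - a) / m) + _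
    omega
  have hulo : ∀ x, (b : ℝ) ^ (a + m * band x) ≤ u x := fun x =>
    (zpow_le_zpow_right₀ (by exact_mod_cast hb1.le) (hband x).1).trans (hlo x)
  have huhi : ∀ x, u x ≤ (b : ℝ) ^ (a + m * band x + m) := fun x =>
    (hhi x).le.trans (zpow_le_zpow_right₀ (by exact_mod_cast hb1.le) (hband x).2)
  have hsep := fun β : ℤ =>
    exists_separator_of_hyperfinite hmono hK hG (Finset.univ.filter (fun x => band x = β))
  choose Yb ρb hYS hYc hYsep hYd using hsep
  refine ⟨Finset.univ.filter (fun x => h x % m = a) ∪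
    Finset.univ.filter (fun x => x ∈ Yb (band x)), fun x => ρb (band x) x, ?_, ?_, ?_⟩
  · have hsecond : ∑ x with x ∈ Yb (band x), u x ≤ ε₁ * (b : ℝ) ^ m * ∑ x, u x := by
      rw [← Finset.sum_fiberwise_of_maps_to (t := Finset.univ.image band) (g := band)
          (fun x _ => Finset.mem_image_of_mem _ (Finset.mem_univ x)),
        ← Finset.sum_fiberwise_of_maps_to (s := Finset.univ) (t := Finset.univ.image band)
          (g := band) (fun x _ => Finset.mem_image_of_mem _ (Finset.mem_univ x)), Finset.mul_sum]
      refine Finset.sum_le_sum fun β _ => ?_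
      set S := Finset.univ.filter (fun x => band x = β) with hS
      have h1 : ∑ x ∈ Finset.univ.filter (fun x => x ∈ Yb (band x)) with band x = β, u x
          ≤ (Yb β).card • (b : ℝ) ^ (a + m * β + m) := by
        refine (Finset.sum_le_card_nsmul _ _ ((b : ℝ) ^ (a + m * β + m)) ?_).trans ?_
        · intro x hx
          have := (Finset.mem_filter.1 hx).2
          rw [← this]; exact huhi x
        · refine nsmul_le_nsmul_left (by positivity) (Finset.card_le_card ?_)
          intro x hx
          simp only [Finset.mem_filter, Finset.mem_univ, true_and] at hx
          rw [← hx.2]; exact hx.1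
      have h2 : S.card • (b : ℝ) ^ (a + m * β) ≤ ∑ x ∈ S, u x := by
        refine Finset.card_nsmul_le_sum _ _ _ fun x hx => ?_
        rw [← (Finset.mem_filter.1 hx).2]; exact hulo x
      rw [nsmul_eq_mul] at h1 h2
      have h3 : (b : ℝ) ^ (a + m * β + m) = (b : ℝ) ^ m * (b : ℝ) ^ (a + m * β) := by
        rw [zpow_add₀ hb0.ne', zpow_natCast, mul_comm]
      calc _ ≤ _ := h1
        _ ≤ (ε₁ * S.card) * (b : ℝ) ^ (a + m * β + m) :=
            mul_le_mul_of_nonneg_right (hYc β) (by positivity)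
        _ = ε₁ * (b : ℝ) ^ m * (S.card * (b : ℝ) ^ (a + m * β)) := by rw [h3]; ring
        _ ≤ _ := mul_le_mul_of_nonneg_left h2 (by positivity)
    have hW0 : 0 ≤ ∑ x, w x := Finset.sum_nonneg fun x _ => (hw x).le
    have h4 : ε₁ * (b : ℝ) ^ m = δ / 4 := by rw [hε₁]; field_simp
    have h5 : (∑ x, u x) / m ≤ δ / 4 * ∑ x, u x := by
      rw [div_le_iff₀ hm0']
      have hmδ : 1 ≤ δ / 4 * m := by
        rw [div_lt_iff₀ hδ] at hm; linarith
      have : 0 ≤ ∑ x, u x := Finset.sum_nonneg fun x _ => (hu0 x).le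
      nlinarith
    rw [h4] at hsecond
    calc _ ≤ ∑ x ∈ Finset.univ.filter (fun x => h x % m = a) ∪
            Finset.univ.filter (fun x => x ∈ Yb (band x)), u x :=
          Finset.sum_le_sum fun x _ => hwu x
      _ ≤ ∑ x with h x % m = a, u x + ∑ x with x ∈ Yb (band x), u x := by
          rw [← Finset.sum_union_inter]
          have : 0 ≤ ∑ x ∈ Finset.univ.filter (fun x => h x % m = a) ∩
            Finset.univ.filter (fun x => x ∈ Yb (band x)), u x :=
              Finset.sum_nonneg fun x _ => (hu0 x).le
          linarith
      _ ≤ δ * ∑ x, w x := by nlinarith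
  · intro x y hx hy hxy
    simp only [Finset.mem_union, Finset.mem_filter, Finset.mem_univ, true_and, not_or] at hx hy
    have hne : ∀ z, ¬ h z % m = a → (h z - a) % m ≠ 0 := by
      intro z hz h0
      apply hz
      rw [← Int.emod_eq_emod_iff_emod_sub_eq_zero] at h0
      rw [h0]
      exact Int.emod_eq_of_lt (Finset.mem_Ico.1 ham).1 (Finset.mem_Ico.1 ham).2
    have hbd : band x = band y :=
      ediv_eq_of_close (by omega) (hne x hx.1) (hne y hy.1)
        (by have := hlip y x hxy.symm; omega) (by have := hlip x y hxy; omega)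
    change ρb (band x) x = ρb (band y) y
    rw [hbd] at hx ⊢
    exact hYsep (band y) x (by simp [hbd]) y (by simp) hx.2 hy.2 hxy
  · exact fun x => hYd _ x

/-! ### Balanced sequences of separators -/

/-- Multiplicative weights: if every positive weight admits a member of the family `𝒮` carrying at
most a `δ` fraction of it, then some finite sequence of members of `𝒮` covers every point at most
a `3δ` fraction of the time. -/
lemma exists_balanced_sequence {V : Type*} [Fintype V] {𝒮 : Finset V → Prop} {δ : ℝ} (hδ : 0 < δ)
    (h : ∀ w : V → ℝ, (∀ x, 0 < w x) → ∃ Y, 𝒮 Y ∧ ∑ x ∈ Y, w x ≤ δ * ∑ x, w x) :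
    ∃ (T : ℕ) (Y : Fin T → Finset V), 0 < T ∧ (∀ i, 𝒮 (Y i)) ∧
      ∀ x, ((Finset.univ.filter (fun i => x ∈ Y i)).card : ℝ) ≤ 3 * δ * T := by
  -- the weight of a point doubles whenever it is covered
  have key : ∀ T : ℕ, ∃ Y : Fin T → Finset V, (∀ i, 𝒮 (Y i)) ∧
      ∑ x : V, (2 : ℝ) ^ (Finset.univ.filter (fun i => x ∈ Y i)).card
        ≤ Fintype.card V * (1 + δ) ^ T := by
    intro T
    induction T with
    | zero => exact ⟨fun _ => ∅, fun i => i.elim0, by simp⟩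
    | succ T ih =>
      obtain ⟨Y, hY, hsum⟩ := ih
      set w : V → ℝ := fun x => (2 : ℝ) ^ (Finset.univ.filter (fun i => x ∈ Y i)).card with hw
      obtain ⟨Z, hZ, hZw⟩ := h w (fun x => by positivity)
      refine ⟨Fin.cons Z Y, fun i => Fin.cases hZ hY i, ?_⟩
      have hstep : ∀ x, (2 : ℝ) ^ (Finset.univ.filter
          (fun i => x ∈ (Fin.cons Z Y : Fin (T + 1) → Finset V) i)).card
          = w x + if x ∈ Z then w x else 0 := by
        intro x
        rw [Fin.card_filter_univ_succ]
        by_cases hx : x ∈ Z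
        · simp only [Fin.cons_zero, hx, if_true, Fin.cons_succ, pow_succ, hw]
          ring
        · simp [hx, hw]
      calc _ = ∑ x, w x + ∑ x ∈ Z, w x := by
            rw [Finset.sum_congr rfl fun x _ => hstep x, Finset.sum_add_distrib]
            congr 1
            rw [← Finset.sum_filter]; congr 1; ext; simp
        _ ≤ (∑ x, w x) * (1 + δ) := by linarith
        _ ≤ (Fintype.card V * (1 + δ) ^ T) * (1 + δ) :=
            mul_le_mul_of_nonneg_right hsum (by positivity)
        _ = _ := by rw [pow_succ]; ring
  obtain ⟨T, hT⟩ := exists_nat_gt (2 * Real.log (Fintype.card V) / δ)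
  have hT0 : (0 : ℝ) < T :=
    lt_of_le_of_lt (div_nonneg (mul_nonneg zero_le_two (Real.log_natCast_nonneg _)) hδ.le) hT
  obtain ⟨Y, hY, hsum⟩ := key T
  refine ⟨T, Y, by exact_mod_cast hT0, hY, fun x => ?_⟩
  set k := (Finset.univ.filter (fun i => x ∈ Y i)).card
  have hV : (0 : ℝ) < Fintype.card V := by
    exact_mod_cast Fintype.card_pos_iff.2 ⟨x⟩
  have h1 : (2 : ℝ) ^ k ≤ Fintype.card V * (1 + δ) ^ T :=
    (Finset.single_le_sum (f := fun x =>
      (2 : ℝ) ^ (Finset.univ.filter (fun i => x ∈ Y i)).card)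
      (fun z _ => by positivity) (Finset.mem_univ x)).trans hsum
  have h2 := Real.log_le_log (by positivity) h1
  rw [Real.log_mul hV.ne' (by positivity), Real.log_pow, Real.log_pow] at h2
  have h3 : Real.log (1 + δ) ≤ δ := by
    have := Real.log_le_sub_one_of_pos (by linarith : 0 < 1 + δ); linarith
  have h4 : (1 / 2 : ℝ) ≤ Real.log 2 := by have := Real.log_two_gt_d9; linarith
  rw [div_lt_iff₀ hδ] at hT
  have h5 : (k : ℝ) * (1 / 2) ≤ k * Real.log 2 := mul_le_mul_of_nonneg_left h4 (by positivity)
  have h6 : (T : ℝ) * Real.log (1 + δ) ≤ T * δ := mul_le_mul_of_nonneg_left h3 hT0.le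
  nlinarith

/-! ### Spread proofs certify hyperfiniteness -/

/-- Greedy rounding. If passing to a neighbour changes the set of indices `j` with `x ∈ A j` by a
small fraction, then one can choose for each vertex `x` an index `φ x` with `x ∈ A (φ x)` such that
few edges join vertices with different indices. Here `A j = {x | j ∈ T x}`. -/
lemma exists_index_choice {V ι : Type*} [Fintype V] [Fintype ι] {G : SimpleGraph V} {d q : ℕ}
    (hG : DegLE G d) (T : V → Finset ι) (hne : ∀ x, (T x).Nonempty)
    (hT : ∀ x y, G.Adj x y → q * (T x \ T y).card ≤ (T x).card) (U : Finset V) :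
    ∃ φ : V → ι, (∀ x, φ x ∈ T x) ∧
      q * ((U ×ˢ U).filter (fun e => G.Adj e.1 e.2 ∧ φ e.1 ≠ φ e.2)).card ≤ 2 * d * U.card := by
  induction hn : U.card using Nat.strong_induction_on generalizing U with
  | _ n ih =>
  subst hn
  rcases U.eq_empty_or_nonempty with rfl | hU
  · choose φ hφ using hne
    exact ⟨φ, hφ, by simp⟩
  -- some `A j` meets `U` and has small boundary inside `U`
  obtain ⟨j, hjne, hj⟩ : ∃ j, 0 < (U.filter (fun x => j ∈ T x)).card ∧
      q * ((U ×ˢ U).filter (fun e => G.Adj e.1 e.2 ∧ j ∈ T e.1 \ T e.2)).card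
        ≤ d * (U.filter (fun x => j ∈ T x)).card := by
    by_contra! hcon
    have hmass : ∑ j, (U.filter (fun x => j ∈ T x)).card = ∑ x ∈ U, (T x).card := by
      simp_rw [Finset.card_filter]
      rw [Finset.sum_comm]
      refine Finset.sum_congr rfl fun x _ => ?_
      rw [← Finset.card_filter]; congr 1; ext; simp
    have hbdry : ∑ j, q * ((U ×ˢ U).filter (fun e => G.Adj e.1 e.2 ∧ j ∈ T e.1 \ T e.2)).card
        ≤ d * ∑ x ∈ U, (T x).card := by
      rw [← Finset.mul_sum]
      have h1 : ∑ j, ((U ×ˢ U).filter (fun e => G.Adj e.1 e.2 ∧ j ∈ T e.1 \ T e.2)).card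
          = ∑ e ∈ (U ×ˢ U).filter (fun e => G.Adj e.1 e.2), (T e.1 \ T e.2).card := by
        have h2 : ∀ j, ((U ×ˢ U).filter (fun e => G.Adj e.1 e.2 ∧ j ∈ T e.1 \ T e.2)).card
            = ∑ e ∈ (U ×ˢ U).filter (fun e => G.Adj e.1 e.2),
              if j ∈ T e.1 \ T e.2 then 1 else 0 := fun j => by
          rw [← Finset.filter_filter, Finset.card_filter]
        rw [Finset.sum_congr rfl fun j _ => h2 j, Finset.sum_comm]
        refine Finset.sum_congr rfl fun x _ => ?_
        rw [← Finset.card_filter]; congr 1; ext; simp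
      rw [h1, Finset.mul_sum, Finset.mul_sum]
      calc _ ≤ ∑ e ∈ (U ×ˢ U).filter (fun e => G.Adj e.1 e.2), (T e.1).card :=
            Finset.sum_le_sum fun e he => hT _ _ (Finset.mem_filter.1 he).2
        _ = ∑ x ∈ U, ∑ y ∈ U.filter (fun y => G.Adj x y), (T x).card := by
            rw [Finset.sum_filter, Finset.sum_product]
            exact Finset.sum_congr rfl fun x _ => (Finset.sum_filter _ _).symm
        _ ≤ _ := by
            refine Finset.sum_le_sum fun x _ => ?_
            rw [Finset.sum_const, smul_eq_mul]
            exact Nat.mul_le_mul_right _ ((Finset.card_le_card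
              (Finset.filter_subset_filter _ (Finset.subset_univ _))).trans
              (card_filter_adj_le hG x))
    obtain ⟨x, hx⟩ := hU
    obtain ⟨j, hj⟩ := hne x
    have hlt : ∑ j, d * (U.filter (fun x => j ∈ T x)).card <
        ∑ j, q * ((U ×ˢ U).filter (fun e => G.Adj e.1 e.2 ∧ j ∈ T e.1 \ T e.2)).card := by
      refine Finset.sum_lt_sum (fun j _ => ?_) ⟨j, Finset.mem_univ _, hcon j
        (Finset.card_pos.2 ⟨x, Finset.mem_filter.2 ⟨hx, hj⟩⟩)⟩
      rcases Nat.eq_zero_or_pos (U.filter (fun x => j ∈ T x)).card with h0 | h0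
      · rw [h0]; exact Nat.zero_le _
      · exact (hcon j h0).le
    rw [← Finset.mul_sum, hmass] at hlt
    exact absurd hbdry (not_le.2 hlt)
  set A := U.filter (fun x => j ∈ T x) with hA
  set U' := U.filter (fun x => j ∉ T x) with hU'
  have hcard : A.card + U'.card = U.card := Finset.card_filter_add_card_filter_not _
  obtain ⟨φ, hφ, hcut⟩ := ih U'.card (by omega) U' rfl
  refine ⟨fun x => if j ∈ T x then j else φ x, fun x => ?_, ?_⟩
  · by_cases hx : j ∈ T x
    · simp [hx]
    · simpa [hx] using hφ x
  set D := (U ×ˢ U).filter (fun e => G.Adj e.1 e.2 ∧ j ∈ T e.1 \ T e.2) with hD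
  set D' := (U' ×ˢ U').filter (fun e => G.Adj e.1 e.2 ∧ φ e.1 ≠ φ e.2) with hDU
  -- a cut pair lies in `U'`, or leaves `A j`, or enters `A j`
  have hsub : (U ×ˢ U).filter (fun e => G.Adj e.1 e.2 ∧
      (if j ∈ T e.1 then j else φ e.1) ≠ (if j ∈ T e.2 then j else φ e.2))
      ⊆ D' ∪ (D ∪ D.image Prod.swap) := by
    rintro ⟨x, y⟩ he
    simp only [Finset.mem_filter, Finset.mem_product] at he
    obtain ⟨⟨hx, hy⟩, hadj, hneq⟩ := he
    simp only [Finset.mem_union, Finset.mem_image, hD, hDU, hU', Finset.mem_filter,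
      Finset.mem_product, Finset.mem_sdiff, Prod.exists, Prod.swap_prod_mk, Prod.mk.injEq]
    by_cases h1 : j ∈ T x <;> by_cases h2 : j ∈ T y
    · simp [h1, h2] at hneq
    · exact Or.inr (Or.inl ⟨⟨hx, hy⟩, hadj, h1, h2⟩)
    · exact Or.inr (Or.inr ⟨y, x, ⟨⟨hy, hx⟩, hadj.symm, h2, h1⟩, rfl, rfl⟩)
    · simp only [h1, h2, if_false] at hneq
      exact Or.inl ⟨⟨⟨hx, h1⟩, hy, h2⟩, hadj, hneq⟩
  have hle : ((U ×ˢ U).filter (fun e => G.Adj e.1 e.2 ∧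
      (if j ∈ T e.1 then j else φ e.1) ≠ (if j ∈ T e.2 then j else φ e.2))).card
      ≤ D'.card + (D.card + D.card) :=
    (Finset.card_le_card hsub).trans ((Finset.card_union_le _ _).trans (Nat.add_le_add_left
      ((Finset.card_union_le _ _).trans (Nat.add_le_add_left Finset.card_image_le _)) _))
  calc _ ≤ q * (D'.card + (D.card + D.card)) := Nat.mul_le_mul_left _ hle
    _ = q * D'.card + 2 * (q * D.card) := by ring
    _ ≤ 2 * d * U'.card + 2 * (d * A.card) := by omega
    _ = 2 * d * U.card := by rw [← hcard]; ring

/-- The verifier for proofs `ℓ : B → Finset ι`, read as the sets `A j = {x | j ∈ ℓ x}`: the root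
lies in some `A j`; a neighbour of the root misses at most a `1/q` fraction of the `A j` that
contain the root; and everything reached from the root inside some `A j` stays within distance
`s` of it. -/
def spreadVerifier (ι : Type) (q s : ℕ) : Verifier (Finset ι) := fun _ _ G b ℓ =>
  (ℓ b).Nonempty ∧ (∀ y, G.Adj b y → q * (ℓ b \ ℓ y).card ≤ (ℓ b).card) ∧
    ∀ j ∈ ℓ b, ∀ z, Relation.ReflTransGen (fun a a' => G.Adj a a' ∧ j ∈ ℓ a') b z →
      G.edist b z ≤ s

lemma spreadVerifier_inv (ι : Type) (q s : ℕ) : (spreadVerifier ι q s).Inv := by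
  have key : ∀ (B B' : Type) [Fintype B] [Fintype B'] (G : SimpleGraph B) (G' : SimpleGraph B')
      (φ : G ≃g G') (b : B) (ℓ : B → Finset ι) (ℓ' : B' → Finset ι), (∀ a, ℓ' (φ a) = ℓ a) →
      spreadVerifier ι q s B G b ℓ → spreadVerifier ι q s B' G' (φ b) ℓ' := by
    rintro B B' _ _ G G' φ b ℓ ℓ' hℓ ⟨h1, h2, h3⟩
    have hℓ' : ∀ a, ℓ (φ.symm a) = ℓ' a := fun a => by rw [← hℓ, φ.apply_symm_apply]
    refine ⟨by rwa [hℓ], fun y hy => ?_, fun j hj z hz => ?_⟩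
    · have := h2 (φ.symm y) (by rw [← φ.map_adj_iff, φ.apply_symm_apply]; exact hy)
      rwa [hℓ', ← hℓ b] at this
    · have hz' := Relation.ReflTransGen.lift (p := fun a a' => G.Adj a a' ∧ j ∈ ℓ a') φ.symm
        (fun a a' h => ⟨φ.symm.map_adj_iff.2 h.1, by rw [hℓ']; exact h.2⟩) _ _ hz
      simp only [Function.onFun, φ.symm_apply_apply] at hz'
      have := (edist_hom_le φ.toHom _ _).trans (h3 j (by rwa [← hℓ]) _ hz')
      simpa using this
  intro B B' _ _ G G' φ b ℓ'
  refine ⟨key B B' G G' φ b _ ℓ' (fun _ => rfl), fun h => ?_⟩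
  have := key B' B G' G φ.symm (φ b) ℓ' (ℓ' ∘ φ) (fun a => by simp) h
  simpa using this

/-- A graph of maximum degree at most `d` with a proof accepted by `spreadVerifier` with parameter
`q ≥ 2d/ε` is hyperfinite with pieces contained in balls of radius `s`. -/
lemma isHyperfinite_of_accepts {ι : Type} [Fintype ι] {q s d : ℕ} {ε : ℝ}
    (hq : 0 < q) (hqε : 2 * d ≤ ε * q)
    {V : Type} [Fintype V] {G : SimpleGraph V} (hG : DegLE G d) {T : V → Finset ι}
    (hT : Accepts (spreadVerifier ι q s) (s + 1) G T) {K : ℕ} (hK : (d + 1) ^ s ≤ K) :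
    IsHyperfinite G ε K := by
  have hball : ∀ x y, G.Adj x y → y ∈ ballSet G (s + 1) x := by
    intro x y h
    have : G.edist x y = 1 := SimpleGraph.edist_eq_one_iff_adj.2 h
    change G.edist x y ≤ _
    rw [this]; exact_mod_cast Nat.le_add_left 1 s
  have hne : ∀ x, (T x).Nonempty := fun x => (hT x).1
  have hedge : ∀ x y, G.Adj x y → q * (T x \ T y).card ≤ (T x).card := fun x y h =>
    (hT x).2.1 ⟨y, hball x y h⟩ h
  -- a walk from `x` inside `A j` never leaves the ball of radius `s`, so the verifier sees it
  have hreach : ∀ x, ∀ j ∈ T x, ∀ z,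
      Relation.ReflTransGen (fun a a' => G.Adj a a' ∧ j ∈ T a') x z → G.edist x z ≤ s := by
    intro x j hj z hz
    obtain ⟨hzB, hz'⟩ : ∃ hzB : z ∈ ballSet G (s + 1) x, Relation.ReflTransGen
        (fun a a' : ballSet G (s + 1) x => (G.induce (ballSet G (s + 1) x)).Adj a a' ∧ j ∈ T a'.1)
        ⟨x, self_mem_ballSet G _ x⟩ ⟨z, hzB⟩ := by
      induction hz with
      | refl => exact ⟨_, Relation.ReflTransGen.refl⟩
      | @tail y z _ hyz ih =>
        obtain ⟨hyB, hy⟩ := ih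
        have h1 := (edist_hom_le (SimpleGraph.Embedding.induce _).toHom _ _).trans
          ((hT x).2.2 j hj _ hy)
        have hzB : z ∈ ballSet G (s + 1) x := by
          refine (SimpleGraph.edist_triangle (v := y)).trans ?_
          rw [SimpleGraph.edist_eq_one_iff_adj.2 hyz.1]
          push_cast
          exact add_le_add_left h1 1
        exact ⟨hzB, hy.tail ⟨hyz.1, hyz.2⟩⟩
    exact (edist_hom_le (SimpleGraph.Embedding.induce _).toHom _ _).trans
      ((hT x).2.2 j hj _ hz')
  obtain ⟨φ, hφ, hcut⟩ := exists_index_choice hG T hne hedge Finset.univ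
  set D := (Finset.univ ×ˢ Finset.univ : Finset (V × V)).filter
    (fun e => G.Adj e.1 e.2 ∧ φ e.1 ≠ φ e.2) with hD
  refine ⟨↑(D.image (fun e => s(e.1, e.2))), ?_, ?_, ?_⟩
  · intro e he
    obtain ⟨⟨x, y⟩, hxy, rfl⟩ := Finset.mem_image.1 (Finset.mem_coe.1 he)
    exact (Finset.mem_filter.1 hxy).2.1
  · rw [Set.ncard_coe_finset]
    have h1 : ((D.image (fun e => s(e.1, e.2))).card : ℝ) ≤ D.card := by
      exact_mod_cast Finset.card_image_le
    have h2 : (q : ℝ) * D.card ≤ 2 * d * Nat.card V := by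
      rw [Nat.card_eq_fintype_card]; exact_mod_cast hcut
    have hq' : (0 : ℝ) < q := by exact_mod_cast hq
    refine h1.trans (le_of_mul_le_mul_left (h2.trans ?_) hq')
    calc (2 * d * Nat.card V : ℝ) ≤ (ε * q) * Nat.card V :=
          mul_le_mul_of_nonneg_right hqε (Nat.cast_nonneg _)
      _ = _ := by ring
  · intro v
    refine le_trans (Set.ncard_le_ncard (t := ballSet G s v) ?_ (Set.toFinite _))
      ((ballSet_ncard_le hG s v).trans hK)
    intro z hz
    obtain ⟨p⟩ := (SimpleGraph.ConnectedComponent.exact hz).symm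
    suffices h : φ z = φ v ∧
        Relation.ReflTransGen (fun a a' => G.Adj a a' ∧ φ v ∈ T a') v z from
      hreach v (φ v) (hφ v) z h.2
    clear hz
    have hr := (SimpleGraph.reachable_iff_reflTransGen _ _).1 p.reachable
    clear p
    induction hr with
    | refl => exact ⟨rfl, Relation.ReflTransGen.refl⟩
    | @tail y z _ hyz ih =>
      obtain ⟨hadj, hnot⟩ := SimpleGraph.deleteEdges_adj.1 hyz
      have heq : φ y = φ z := by
        by_contra hcon
        exact hnot (Finset.mem_coe.2 (Finset.mem_image.2 ⟨(y, z), by simp [hD, hadj, hcon], rfl⟩))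
      have hz : φ z = φ v := heq ▸ ih.1
      exact ⟨hz, ih.2.tail ⟨hadj, hz ▸ hφ z⟩⟩

/-! ### Construction of accepted proofs -/

lemma card_fin_lt {M a : ℕ} (h : a ≤ M) :
    (Finset.univ.filter (fun t : Fin M => t.val < a)).card = a := by
  rw [Fin.card_filter_val_lt, min_eq_right h]

lemma card_fin_lt_not_lt_le {M a b : ℕ} :
    (Finset.univ.filter (fun t : Fin M => t.val < a ∧ ¬ t.val < b)).card ≤ a - b := by
  rw [← Nat.card_Ico, ← Finset.card_map Fin.valEmbedding]
  refine Finset.card_le_card fun t' ht' => ?_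
  obtain ⟨t, ht, rfl⟩ := Finset.mem_map.1 ht'
  simp only [Finset.mem_filter, Finset.mem_univ, true_and, not_lt] at ht
  exact Finset.mem_Ico.2 ⟨ht.2, ht.1⟩

/-- Given `N` maps `ρ i` moving points by at most `r` and such that adjacent vertices are
identified by most of them, there is a proof accepted by `spreadVerifier`. The law of `ρ i x` for
uniform `i` is rounded to an integer vector `F x` with entries at most `M`, and vertices `z` are
named by a colouring injective on balls of radius `r`; the pair `(k, t)` labels `x` if the
vertex `z` of colour `k` near `x` satisfies `t < F x z`. -/
lemma exists_accepted_proof {d q r N : ℕ} (hN : 0 < N) {V : Type} [Fintype V] {G : SimpleGraph V}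
    (hG : DegLE G d) (ρ : Fin N → V → V) (hρ : ∀ i x, G.edist x (ρ i x) ≤ r)
    (hadj : ∀ x y, G.Adj x y →
      2 * q * (Finset.univ.filter (fun i => ρ i x ≠ ρ i y)).card ≤ N) :
    ∃ T : V → Finset (Fin ((d + 1) ^ (2 * r + 1)) × Fin (2 * (q + 1) * (d + 1) ^ r)),
      Accepts (spreadVerifier _ q (2 * r)) (2 * r + 1) G T := by
  obtain ⟨c, hc⟩ := exists_distance_coloring hG (2 * r + 1)
  set B := (d + 1) ^ r with hB
  set M := 2 * (q + 1) * B with hM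
  have hB0 : 0 < B := by positivity
  let cnt : V → V → ℕ := fun x z => (Finset.univ.filter (fun i => ρ i x = z)).card
  let F : V → V → ℕ := fun x z => M * cnt x z / N
  have hFle : ∀ x z, N * F x z ≤ M * cnt x z := fun x z => Nat.mul_div_le _ _
  have hFge : ∀ x z, M * cnt x z ≤ N * F x z + N := fun x z => by
    have := Nat.lt_mul_div_succ (M * cnt x z) hN
    rw [mul_add, mul_one] at this
    exact this.le
  have hFM : ∀ x z, F x z ≤ M := fun x z => by
    refine Nat.div_le_of_le_mul ?_
    rw [mul_comm N M]
    refine Nat.mul_le_mul_left _ ?_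
    simpa using Finset.card_le_univ (Finset.univ.filter (fun i => ρ i x = z))
  have hFball : ∀ x z, 0 < F x z → z ∈ ballSet G r x := by
    intro x z h
    have hcnt : 0 < cnt x z := by
      by_contra h0
      have : cnt x z = 0 := by omega
      simp [F, this] at h
    obtain ⟨i, hi⟩ := Finset.card_pos.1 hcnt
    rw [← (Finset.mem_filter.1 hi).2]
    exact hρ i x
  let S : V → Finset V := fun x => (ballSet G r x).toFinset
  have hScard : ∀ x, (S x).card ≤ B := fun x => by
    rw [← Set.ncard_eq_toFinset_card']; exact ballSet_ncard_le hG r x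
  have hρS : ∀ x i, ρ i x ∈ S x := fun x i => Set.mem_toFinset.2 (hρ i x)
  -- total mass of `F x`
  have hmass : ∀ x, M ≤ ∑ z, F x z + B := by
    intro x
    have h1 : ∑ z ∈ S x, cnt x z = N := by
      rw [← Finset.card_eq_sum_card_fiberwise (fun i _ => hρS x i)]; simp
    have h2 : N * M ≤ N * (∑ z, F x z + B) := by
      calc N * M = ∑ z ∈ S x, M * cnt x z := by rw [← Finset.mul_sum, h1, mul_comm]
        _ ≤ ∑ z ∈ S x, (N * F x z + N) := Finset.sum_le_sum fun z _ => hFge x z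
        _ = N * ∑ z ∈ S x, F x z + (S x).card * N := by
            rw [Finset.sum_add_distrib, ← Finset.mul_sum, Finset.sum_const, smul_eq_mul]
        _ ≤ N * ∑ z, F x z + B * N := Nat.add_le_add
            (Nat.mul_le_mul_left _ (Finset.sum_le_sum_of_subset (Finset.subset_univ _)))
            (Nat.mul_le_mul_right _ (hScard x))
        _ = _ := by ring
    exact Nat.le_of_mul_le_mul_left h2 hN
  -- variation of `F` along an edge
  have hvar : ∀ x y, G.Adj x y → q * ∑ z, (F x z - F y z) ≤ ∑ z, F x z := by
    intro x y hxy
    set E := Finset.univ.filter (fun i => ρ i x ≠ ρ i y) with hE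
    have h1 : ∀ z, N * (F x z - F y z) ≤ M * (E.filter (fun i => ρ i x = z)).card + N := by
      intro z
      have h2 : cnt x z ≤ cnt y z + (E.filter (fun i => ρ i x = z)).card := by
        refine (Finset.card_le_card ?_).trans (Finset.card_union_le _ _)
        intro i hi
        simp only [Finset.mem_filter, Finset.mem_univ, true_and, Finset.mem_union, hE] at hi ⊢
        by_cases h : ρ i y = z
        · exact Or.inl h
        · exact Or.inr ⟨fun h' => h (h' ▸ hi), hi⟩
      have h3 := Nat.mul_le_mul_left M h2
      rw [mul_add] at h3
      have h4 := hFle x z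
      have h5 := hFge y z
      rw [Nat.mul_sub]; omega
    have h6 : ∑ z ∈ S x, (E.filter (fun i => ρ i x = z)).card = E.card :=
      (Finset.card_eq_sum_card_fiberwise (fun i _ => hρS x i)).symm
    have h7 : N * ∑ z, (F x z - F y z) ≤ M * E.card + N * B := by
      rw [← Finset.sum_subset (Finset.subset_univ (S x)), Finset.mul_sum]
      · calc _ ≤ ∑ z ∈ S x, (M * (E.filter (fun i => ρ i x = z)).card + N) :=
              Finset.sum_le_sum fun z _ => h1 z
          _ = M * E.card + (S x).card * N := by
              rw [Finset.sum_add_distrib, ← Finset.mul_sum, h6, Finset.sum_const, smul_eq_mul]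
          _ ≤ _ := by
              have := Nat.mul_le_mul_right N (hScard x); rw [mul_comm N B]; omega
      · intro z _ hz
        have : F x z = 0 := by
          by_contra h0
          exact hz (Set.mem_toFinset.2 (hFball x z (Nat.pos_of_ne_zero h0)))
        simp [this]
    have h8 : N * (q * ∑ z, (F x z - F y z)) ≤ N * ((2 * q + 1) * B) := by
      calc _ = q * (N * ∑ z, (F x z - F y z)) := by ring
        _ ≤ q * (M * E.card + N * B) := Nat.mul_le_mul_left _ h7
        _ = (q + 1) * B * (2 * q * E.card) + q * N * B := by rw [hM]; ring
        _ ≤ (q + 1) * B * N + q * N * B :=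
            Nat.add_le_add_right (Nat.mul_le_mul_left _ (hadj x y hxy)) _
        _ = _ := by ring
    refine (Nat.le_of_mul_le_mul_left h8 hN).trans ?_
    have := hmass x
    have hM' : M = (2 * q + 1) * B + B := by rw [hM]; ring
    omega
  let lev : V → Finset (V × Fin M) := fun x => Finset.univ.filter (fun p => p.2.val < F x p.1)
  let code : V × Fin M → Fin ((d + 1) ^ (2 * r + 1)) × Fin M := fun p => (c p.1, p.2)
  let T : V → Finset (Fin ((d + 1) ^ (2 * r + 1)) × Fin M) := fun x => (lev x).image code
  have hlevball : ∀ x p, p ∈ lev x → G.edist x p.1 ≤ r := fun x p hp =>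
    hFball x p.1 (Nat.zero_lt_of_lt (Finset.mem_filter.1 hp).2)
  have hTcard : ∀ x, (T x).card = ∑ z, F x z := by
    intro x
    have h1 : (T x).card = (lev x).card := by
      refine Finset.card_image_of_injOn fun p hp p' hp' h => ?_
      obtain ⟨h2, h3⟩ := Prod.mk.inj h
      refine Prod.ext (hc _ _ ?_ h2) h3
      refine (SimpleGraph.edist_triangle (v := x)).trans ?_
      rw [SimpleGraph.edist_comm]
      refine (add_le_add (hlevball x p hp) (hlevball x p' hp')).trans ?_
      exact_mod_cast (by omega)
    rw [h1, Finset.card_filter, ← Finset.univ_product_univ, Finset.sum_product]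
    refine Finset.sum_congr rfl fun z _ => ?_
    rw [← Finset.card_filter, card_fin_lt (hFM x z)]
  have hTdiff : ∀ x y, (T x \ T y).card ≤ ∑ z, (F x z - F y z) := by
    intro x y
    have h1 : T x \ T y ⊆ (lev x \ lev y).image code := by
      intro j hj
      obtain ⟨hx, hy⟩ := Finset.mem_sdiff.1 hj
      obtain ⟨p, hp, rfl⟩ := Finset.mem_image.1 hx
      exact Finset.mem_image_of_mem _
        (Finset.mem_sdiff.2 ⟨hp, fun h => hy (Finset.mem_image_of_mem _ h)⟩)
    refine (Finset.card_le_card h1).trans (Finset.card_image_le.trans ?_)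
    have h2 : lev x \ lev y =
        Finset.univ.filter (fun p : V × Fin M => p.2.val < F x p.1 ∧ ¬ p.2.val < F y p.1) := by
      ext p; simp [lev]
    rw [h2, Finset.card_filter, ← Finset.univ_product_univ, Finset.sum_product]
    refine Finset.sum_le_sum fun z _ => ?_
    rw [← Finset.card_filter]
    convert card_fin_lt_not_lt_le (M := M)
    rfl
  refine ⟨T, fun x => ⟨?_, fun y hy => ?_, fun j hj z hz => ?_⟩⟩
  · refine Finset.card_pos.1 ?_
    rw [hTcard x]
    have := hmass x
    have hM' : M = (2 * q + 1) * B + B := by rw [hM]; ring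
    have : 0 < (2 * q + 1) * B := by positivity
    omega
  · have h := (Nat.mul_le_mul_left q (hTdiff x y.1)).trans (hvar x y.1 hy)
    rw [← hTcard x] at h
    convert h
    rfl
  · -- inside `A j`, the vertex of the given colour near the current point stays the same
    obtain ⟨⟨z₀, t⟩, hp, rfl⟩ := Finset.mem_image.1 hj
    have hlev : (z₀, t) ∈ lev z.1 := by
      induction hz with
      | refl => exact hp
      | @tail a a' _ h ih =>
        obtain ⟨haa, hT⟩ := h
        obtain ⟨⟨z₁, t'⟩, hp', heq⟩ := Finset.mem_image.1 hT
        obtain ⟨h2, h3⟩ := Prod.mk.inj heq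
        have : z₁ = z₀ := by
          refine hc _ _ ?_ h2
          have e1 : G.edist z₁ a'.1 ≤ r := by
            rw [SimpleGraph.edist_comm]; exact hlevball _ _ hp'
          have e2 : G.edist a'.1 a.1 = 1 := SimpleGraph.edist_eq_one_iff_adj.2 haa.symm
          have e3 : G.edist a.1 z₀ ≤ r := hlevball _ _ ih
          calc G.edist z₁ z₀ ≤ G.edist z₁ a'.1 + (G.edist a'.1 a.1 + G.edist a.1 z₀) :=
                SimpleGraph.edist_triangle.trans
                  (add_le_add le_rfl SimpleGraph.edist_triangle)
            _ ≤ r + (1 + r) := add_le_add e1 (add_le_add e2.le e3)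
            _ ≤ _ := by exact_mod_cast (by omega)
        have ht : t' = t := h3
        rwa [this, ht] at hp'
    refine ball_induce_edist_le (Nat.le_succ _) ?_ z.2
    have e1 : G.edist z₀ z.1 ≤ r := by
      rw [SimpleGraph.edist_comm]; exact hlevball _ _ hlev
    refine (SimpleGraph.edist_triangle (v := z₀)).trans
      ((add_le_add (hlevball x _ hp) e1).trans ?_)
    exact_mod_cast (by omega)

/-- For monotone hyperfinite classes there is a verifier squeezing `P` inside the
`(ε,K)`-hyperfinite graphs. -/
theorem verifier_into_hyperfinite (d : ℕ) (hd : 1 ≤ d) (P : GraphClass)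
    (hPdeg : ∀ (V : Type) [Fintype V] (G : SimpleGraph V), P V G → DegLE G d)
    (hmono : P.Mono) (hhyp : P.Hyperfinite) :
    ∀ ε : ℝ, 0 < ε →
      ∃ (N : ℕ) (_ : 1 ≤ N) (Q : Type) (_ : Finite Q) (s : ℕ) (_ : 1 ≤ s)
        (𝒞 : Verifier Q), 𝒞.Inv ∧
        (∀ (V : Type) [Fintype V] (G : SimpleGraph V), P V G →
          ∃ T : V → Q, Accepts 𝒞 s G T) ∧
        (∀ (V : Type) [Fintype V] (G : SimpleGraph V), DegLE G d →
          (∃ T : V → Q, Accepts 𝒞 s G T) →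
          ∀ K : ℕ, N ≤ K → IsHyperfinite G ε K) := by
  intro ε hε
  obtain ⟨q, hq⟩ := exists_nat_gt (2 * d / ε)
  have hq0' : (0 : ℝ) < q := lt_of_le_of_lt (by positivity) hq
  have hq0 : 0 < q := by exact_mod_cast hq0'
  have hqε : (2 * d : ℝ) ≤ ε * q := by
    rw [div_lt_iff₀ hε] at hq; linarith
  -- each endpoint of an edge is removed at most `N / (4q)` times among `N` separators
  obtain ⟨r, hr⟩ := exists_weighted_separator hd hPdeg hmono hhyp
    (by positivity : 0 < 1 / (12 * q : ℝ))
  refine ⟨(d + 1) ^ (2 * r), Nat.one_le_pow _ _ (Nat.succ_pos _),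
    Finset (Fin ((d + 1) ^ (2 * r + 1)) × Fin (2 * (q + 1) * (d + 1) ^ r)), inferInstance,
    2 * r + 1, Nat.le_add_left _ _, spreadVerifier _ q (2 * r), spreadVerifier_inv _ _ _, ?_, ?_⟩
  · intro V _ G hG
    obtain ⟨N, Y, hN, hY, hcov⟩ := exists_balanced_sequence
      (𝒮 := fun Y => ∃ ρ : V → V, (∀ x y, x ∉ Y → y ∉ Y → G.Adj x y → ρ x = ρ y) ∧
        ∀ x, G.edist x (ρ x) ≤ r) (by positivity : 0 < 1 / (12 * q : ℝ))
      (fun w hw => by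
        obtain ⟨Y, ρ, h1, h2, h3⟩ := hr V G hG w hw
        exact ⟨Y, ⟨ρ, h2, h3⟩, h1⟩)
    choose ρ hsep hdist using hY
    refine exists_accepted_proof hN (hPdeg V G hG) ρ hdist fun x y hxy => ?_
    have hcov' : ∀ x, 4 * q * (Finset.univ.filter (fun i => x ∈ Y i)).card ≤ N := by
      intro x
      have h1 := mul_le_mul_of_nonneg_left (hcov x) (by positivity : (0 : ℝ) ≤ 4 * q)
      have h2 : (4 * q : ℝ) * (3 * (1 / (12 * q)) * N) = N := by field_simp; norm_num
      rw [h2] at h1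
      exact_mod_cast h1
    have hsub : (Finset.univ.filter (fun i => ρ i x ≠ ρ i y)).card ≤
        (Finset.univ.filter (fun i => x ∈ Y i)).card +
          (Finset.univ.filter (fun i => y ∈ Y i)).card := by
      refine (Finset.card_le_card ?_).trans (Finset.card_union_le _ _)
      intro i hi
      simp only [Finset.mem_filter, Finset.mem_univ, true_and, Finset.mem_union] at hi ⊢
      by_contra! hcon
      exact hi (hsep i x y hcon.1 hcon.2 hxy)
    have h1 := Nat.mul_le_mul_left (4 * q) hsub
    have h2 := hcov' x
    have h3 := hcov' y
    rw [mul_add] at h1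
    have h4 : 4 * q * (Finset.univ.filter (fun i => ρ i x ≠ ρ i y)).card =
      2 * (2 * q * (Finset.univ.filter (fun i => ρ i x ≠ ρ i y)).card) := by ring
    omega
  · rintro V _ G hG ⟨T, hT⟩ K hK
    exact isHyperfinite_of_accepts hq0 hqε hG hT hK

end
end

section
/- Let d ≥ 2 and let P be a class of finite simple graphs of maximum degree at most d such that for every ε > 0 there exists r ≥ 1 with every graph in P being (ε,r)-uniform (i.e. P has Property A). Then P is hyperfinite: for every ε' > 0 there exists K ≥ 1 such that every graph in P is (ε',K)-hyperfinite. -/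
/-!
The proof is a deterministic greedy argument. Let `f` witness `(ε, r)`-uniformity and let `S` be
any nonempty set of vertices. For each `z`, the positive superlevel sets of `x ↦ f x z` lie in the
ball of radius `r` around `z`. If each such superlevel set `L` within `S` had more than `c * #L`
edges to `S \ L`, then the discrete coarea inequality `coarea` would give, after summing over `z`,
`c * #S ≤ ∑ ‖f x - f y‖₁ ≤ ε * d * #S`, the sum being over adjacent pairs in `S`; this is absurd
for `ε * d < c`. Hence every nonempty `S` contains a nonempty `L` inside a ball of radius `r` with
at most `c * #L` edges to `S \ L` (`exists_small_boundary`). Removing `L` from `S`, cutting these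
edges, and repeating cuts `G` into pieces of at most `(d + 1) ^ r` vertices, and since the removed
sets are disjoint, at most `c * #V` edges are cut in total (`greedy`).

The point that makes this work is that the estimate survives restriction to an arbitrary `S`: the
measures `f x` for `x ∈ S` still have total mass one on `V`.
-/

open scoped Classical symmDiff

noncomputable section

/-- The ordered pairs of adjacent vertices in `S`. -/
def arcs {V : Type*} (G : SimpleGraph V) (S : Finset V) : Finset (V × V) :=
  (S ×ˢ S).filter fun p => G.Adj p.1 p.2

/-- The arcs in `S` that leave `L`; each edge of `G` between `L` and `S \ L` (for `L ⊆ S`)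
is counted once. -/
def outArcs {V : Type*} (G : SimpleGraph V) (S L : Finset V) : Finset (V × V) :=
  (arcs G S).filter fun p => p.1 ∈ L ∧ p.2 ∉ L

/-- Discrete coarea inequality: an isoperimetric inequality for the sets on which `g` is positive
gives an `ℓ¹` Sobolev inequality for `g`. The induction peels off the lowest positive level
of `g`. -/
lemma coarea {V : Type*} (G : SimpleGraph V) (S : Finset V) (c : ℝ) (n : ℕ) :
    ∀ g : V → ℝ, (∀ x, 0 ≤ g x) → (S.filter fun x => 0 < g x).card = n →
      (∀ L ⊆ S, L.Nonempty → (∀ x ∈ L, 0 < g x) → c * L.card ≤ ((outArcs G S L).card : ℝ)) →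
      c * ∑ x ∈ S, g x ≤ ∑ p ∈ arcs G S, max (g p.1 - g p.2) 0 := by
  induction n using Nat.strong_induction_on with
  | _ n ih =>
    intro g hg hn h
    set T := S.filter fun x => 0 < g x with hT
    rcases T.eq_empty_or_nonempty with hTe | hTn
    · have h0 : ∀ x ∈ S, g x = 0 := by
        intro x hx
        by_contra hne
        have : x ∈ T := by
          rw [hT, Finset.mem_filter]
          exact ⟨hx, lt_of_le_of_ne (hg x) (Ne.symm hne)⟩
        simp [hTe] at this
      rw [Finset.sum_eq_zero h0, mul_zero]
      exact Finset.sum_nonneg fun p _ => le_max_right _ _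
    · obtain ⟨x₀, hx₀, hmin⟩ := T.exists_min_image g hTn
      have hm : 0 < g x₀ := (Finset.mem_filter.1 hx₀).2
      set m := g x₀ with hmdef
      set g' : V → ℝ := fun x => max (g x - m) 0 with hg'
      have hpos : ∀ x, 0 < g' x → 0 < g x := by
        intro x hx
        have : 0 < g x - m := by
          by_contra hcon
          simp [hg', max_eq_right (not_lt.1 hcon)] at hx
        linarith
      have hlt : (S.filter fun x => 0 < g' x).card < n := by
        rw [← hn]
        apply Finset.card_lt_card
        refine (Finset.ssubset_iff_of_subset ?_).2 ⟨x₀, hx₀, ?_⟩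
        · intro x hx
          rw [Finset.mem_filter] at hx
          rw [hT, Finset.mem_filter]
          exact ⟨hx.1, hpos x hx.2⟩
        · simp [hg', hmdef]
      have key := ih _ hlt g' (fun x => le_max_right _ _) rfl
        (fun L hL hne hp => h L hL hne fun x hx => hpos x (hp x hx))
      have hT1 : c * T.card ≤ ((outArcs G S T).card : ℝ) :=
        h T (Finset.filter_subset _ _) hTn fun x hx => (Finset.mem_filter.1 hx).2
      have hin : ∀ x ∈ T, g x = m + g' x := by
        intro x hx
        have := hmin x hx
        simp only [hg']
        rw [max_eq_left (by linarith)]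
        ring
      have hout : ∀ x ∈ S, x ∉ T → g x = 0 ∧ g' x = 0 := by
        intro x hx hxT
        have h0 : g x = 0 := by
          by_contra hne
          exact hxT (Finset.mem_filter.2 ⟨hx, lt_of_le_of_ne (hg x) (Ne.symm hne)⟩)
        refine ⟨h0, ?_⟩
        simp only [hg', h0]
        exact max_eq_right (by linarith)
      have hsum : ∑ x ∈ S, g x = m * T.card + ∑ x ∈ S, g' x := by
        have : ∀ x ∈ S, g x = (if x ∈ T then m else 0) + g' x := by
          intro x hx
          by_cases hxT : x ∈ T
          · simp [hxT, hin x hxT]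
          · simp [hxT, hout x hx hxT]
        rw [Finset.sum_congr rfl this, Finset.sum_add_distrib, ← Finset.sum_filter,
          Finset.sum_const, Finset.filter_mem_eq_inter,
          Finset.inter_eq_right.2 (Finset.filter_subset _ _), nsmul_eq_mul]
        ring
      have hsum2 : ∑ p ∈ arcs G S, max (g p.1 - g p.2) 0
          = m * (outArcs G S T).card + ∑ p ∈ arcs G S, max (g' p.1 - g' p.2) 0 := by
        have : ∀ p ∈ arcs G S, max (g p.1 - g p.2) 0
            = (if p.1 ∈ T ∧ p.2 ∉ T then m else 0) + max (g' p.1 - g' p.2) 0 := by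
          rintro ⟨x, y⟩ hp
          obtain ⟨⟨hx, hy⟩, -⟩ : (x ∈ S ∧ y ∈ S) ∧ G.Adj x y := by simpa [arcs] using hp
          have nx : 0 ≤ g' x := le_max_right _ _
          have ny : 0 ≤ g' y := le_max_right _ _
          have gx := hg x
          have gy := hg y
          by_cases hxT : x ∈ T <;> by_cases hyT : y ∈ T
          · simp [hxT, hyT, hin x hxT, hin y hyT]
          · simp only [hxT, hyT, hin x hxT, hout y hy hyT, not_false_eq_true, and_self, if_true,
              sub_zero]
            rw [max_eq_left nx, max_eq_left (by linarith)]
          · simp only [hxT, hyT, hout x hx hxT, false_and, if_false]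
            rw [max_eq_right (by linarith), max_eq_right (by linarith), add_zero]
          · simp [hxT, hyT, hout x hx hxT, hout y hy hyT]
        rw [Finset.sum_congr rfl this, Finset.sum_add_distrib, ← Finset.sum_filter,
          Finset.sum_const, nsmul_eq_mul, outArcs]
        ring
      rw [hsum, hsum2]
      have := mul_le_mul_of_nonneg_left hT1 hm.le
      nlinarith

lemma card_arcs_le {V : Type*} [Fintype V] (G : SimpleGraph V) (d : ℕ) (hG : DegLE G d)
    (S : Finset V) : (arcs G S).card ≤ d * S.card := by
  have : (arcs G S).card ≤ (S.sigma fun x => G.neighborFinset x).card := by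
    apply Finset.card_le_card_of_injOn (fun p => ⟨p.1, p.2⟩)
    · rintro ⟨x, y⟩ hp
      have : (x ∈ S ∧ y ∈ S) ∧ G.Adj x y := by simpa [arcs] using hp
      simp [this.1.1, this.2]
    · rintro ⟨x, y⟩ _ ⟨x', y'⟩ _ h
      simpa using h
  refine this.trans ?_
  rw [Finset.card_sigma, mul_comm, ← smul_eq_mul]
  apply Finset.sum_le_card_nsmul
  intro x _
  have := hG x
  rwa [← SimpleGraph.coe_neighborFinset, Set.ncard_coe_finset] at this

/-- Balls of radius `r` in a graph of maximum degree at most `d` have at most `(d + 1) ^ r`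
vertices. -/
lemma exists_ball {V : Type*} [Fintype V] (G : SimpleGraph V) (d : ℕ) (hG : DegLE G d)
    (z : V) (r : ℕ) : ∃ B : Finset V, B.card ≤ (d + 1) ^ r ∧
      ∀ x, ∀ p : G.Walk x z, p.length ≤ r → x ∈ B := by
  induction r with
  | zero =>
    refine ⟨{z}, by simp, fun x p hp => ?_⟩
    simpa using SimpleGraph.Walk.eq_of_length_eq_zero (Nat.le_zero.1 hp)
  | succ r ih =>
    obtain ⟨B, hB, hw⟩ := ih
    refine ⟨B ∪ B.biUnion fun y => G.neighborFinset y, ?_, ?_⟩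
    · have h1 : (B.biUnion fun y => G.neighborFinset y).card ≤ B.card * d := by
        apply Finset.card_biUnion_le_card_mul
        intro x _
        have := hG x
        rwa [← SimpleGraph.coe_neighborFinset, Set.ncard_coe_finset] at this
      calc _ ≤ B.card + B.card * d := (Finset.card_union_le _ _).trans (by omega)
        _ = B.card * (d + 1) := by ring
        _ ≤ (d + 1) ^ r * (d + 1) := Nat.mul_le_mul_right _ hB
        _ = _ := (pow_succ _ _).symm
    · intro x p hp
      cases p with
      | nil => exact Finset.mem_union_left _ (hw _ .nil (by simp))
      | cons hadj q =>
        refine Finset.mem_union_right _ (Finset.mem_biUnion.2 ⟨_, hw _ q ?_, ?_⟩)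
        · simpa using hp
        · simpa using hadj.symm

/-- Every nonempty vertex set `S` of a sufficiently uniform graph contains a small nonempty `L`
with few edges to `S \ L`. -/
lemma exists_small_boundary {V : Type*} [Fintype V] (G : SimpleGraph V) (d r : ℕ)
    (hG : DegLE G d) (ε c : ℝ) (hε : 0 ≤ ε) (hc : ε * d < c) (hU : IsUniform G ε r)
    (S : Finset V) (hS : S.Nonempty) :
    ∃ L ⊆ S, L.Nonempty ∧ L.card ≤ (d + 1) ^ r ∧ ((outArcs G S L).card : ℝ) ≤ c * L.card := by
  obtain ⟨f, hf0, hf1, hfe, hfr⟩ := hU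
  by_contra! hcon
  have hz : ∀ z, c * ∑ x ∈ S, f x z ≤ ∑ p ∈ arcs G S, max (f p.1 z - f p.2 z) 0 := by
    intro z
    refine coarea G S c _ (fun x => f x z) (fun x => hf0 x z) rfl ?_
    intro L hLS hLn hpos
    obtain ⟨B, hB, hw⟩ := exists_ball G d hG z r
    refine (hcon L hLS hLn ((Finset.card_le_card ?_).trans hB)).le
    intro x hx
    have hd : G.edist x z ≤ r := by
      by_contra hlt
      exact (hpos x hx).ne' (hfr x z (not_le.1 hlt))
    have hne : G.edist x z ≠ ⊤ := fun h => by simp [h] at hd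
    obtain ⟨p, hp⟩ := SimpleGraph.exists_walk_of_edist_ne_top hne
    exact hw x p (by rw [← hp] at hd; exact_mod_cast hd)
  have hsum := Finset.sum_le_sum fun z (_ : z ∈ Finset.univ) => hz z
  rw [← Finset.mul_sum, Finset.sum_comm, Finset.sum_comm (t := arcs G S)] at hsum
  simp only [hf1, Finset.sum_const, nsmul_eq_mul, mul_one] at hsum
  have hup : ∑ p ∈ arcs G S, ∑ z, max (f p.1 z - f p.2 z) 0 ≤ (arcs G S).card • ε := by
    apply Finset.sum_le_card_nsmul
    intro p hp
    refine le_trans (Finset.sum_le_sum fun z _ => ?_) (hfe p.1 p.2 (Finset.mem_filter.1 hp).2).le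
    exact max_le (le_abs_self _) (abs_nonneg _)
  have hcard : ((arcs G S).card : ℝ) ≤ d * S.card := by exact_mod_cast card_arcs_le G d hG S
  have hSpos : (0 : ℝ) < S.card := by exact_mod_cast hS.card_pos
  rw [nsmul_eq_mul] at hup
  nlinarith [mul_le_mul_of_nonneg_right hcard hε, mul_lt_mul_of_pos_right hc hSpos]

/-- Greedy decomposition: if every nonempty vertex set has a small nonempty subset with small
relative boundary, then every `S` can be cut into pieces of at most `K` vertices by few edges.
The pieces are recorded as sets `L` closed under the remaining edges inside `S`. -/
lemma greedy {V : Type*} (G : SimpleGraph V) (K : ℕ) (c : ℝ)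
    (h : ∀ S : Finset V, S.Nonempty →
      ∃ L ⊆ S, L.Nonempty ∧ L.card ≤ K ∧ ((outArcs G S L).card : ℝ) ≤ c * L.card)
    (S : Finset V) :
    ∃ W : Finset (Sym2 V), (W : Set (Sym2 V)) ⊆ G.edgeSet ∧ (W.card : ℝ) ≤ c * S.card ∧
      ∀ v ∈ S, ∃ L : Finset V, v ∈ L ∧ L.card ≤ K ∧
        ∀ x ∈ L, ∀ y ∈ S, G.Adj x y → s(x, y) ∉ W → y ∈ L := by
  suffices H : ∃ W : Finset (Sym2 V), (W : Set (Sym2 V)) ⊆ G.edgeSet ∧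
      (W.card : ℝ) ≤ c * S.card ∧ ∀ v ∈ S, ∃ L ⊆ S, v ∈ L ∧ L.card ≤ K ∧
        ∀ x ∈ L, ∀ y ∈ S, G.Adj x y → s(x, y) ∉ W → y ∈ L by
    obtain ⟨W, h1, h2, h3⟩ := H
    exact ⟨W, h1, h2, fun v hv => let ⟨L, _, hL⟩ := h3 v hv; ⟨L, hL⟩⟩
  induction S using Finset.strongInduction with
  | _ S ih =>
    rcases S.eq_empty_or_nonempty with rfl | hS
    · exact ⟨∅, by simp, by simp, by simp⟩
    obtain ⟨L, hLS, hLn, hLK, hLb⟩ := h S hS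
    obtain ⟨W, hW, hWc, hWp⟩ := ih (S \ L) (Finset.sdiff_ssubset hLS hLn)
    have hmem : ∀ x ∈ L, ∀ y ∈ S, y ∉ L → G.Adj x y →
        s(x, y) ∈ (outArcs G S L).image fun p => s(p.1, p.2) := by
      intro x hx y hy hyL hadj
      refine Finset.mem_image.2 ⟨(x, y), ?_, rfl⟩
      simp [outArcs, arcs, hx, hy, hyL, hadj, hLS hx]
    refine ⟨W ∪ (outArcs G S L).image fun p => s(p.1, p.2), ?_, ?_, ?_⟩
    · intro e he
      rcases Finset.mem_union.1 (Finset.mem_coe.1 he) with he | he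
      · exact hW he
      · obtain ⟨p, hp, rfl⟩ := Finset.mem_image.1 he
        exact (Finset.mem_filter.1 (Finset.mem_filter.1 hp).1).2
    · have h1 : ((W ∪ (outArcs G S L).image fun p => s(p.1, p.2)).card : ℝ)
          ≤ W.card + (outArcs G S L).card := by
        exact_mod_cast (Finset.card_union_le _ _).trans
          (Nat.add_le_add_left Finset.card_image_le _)
      have h2 : ((S \ L).card : ℝ) + L.card = S.card := by
        exact_mod_cast Finset.card_sdiff_add_card_eq_card hLS
      rw [← h2]
      linarith
    · intro v hv
      by_cases hvL : v ∈ L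
      · refine ⟨L, hLS, hvL, hLK, fun x hx y hy hadj hn => ?_⟩
        by_contra hyL
        exact hn (Finset.mem_union_right _ (hmem x hx y hy hyL hadj))
      · obtain ⟨M, hMS, hvM, hMK, hM⟩ := hWp v (Finset.mem_sdiff.2 ⟨hv, hvL⟩)
        refine ⟨M, hMS.trans Finset.sdiff_subset, hvM, hMK, fun x hx y hy hadj hn => ?_⟩
        have hxS := Finset.mem_sdiff.1 (hMS hx)
        refine hM x hx y (Finset.mem_sdiff.2 ⟨hy, fun hyL => ?_⟩) hadj
          fun hxy => hn (Finset.mem_union_left _ hxy)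
        apply hn
        rw [Sym2.eq_swap]
        exact Finset.mem_union_right _ (hmem y hyL x hxS.1 hxS.2 hadj.symm)

/-- Property A implies hyperfiniteness for classes of bounded-degree graphs. -/
theorem propertyA_implies_hyperfinite (d : ℕ) (hd : 2 ≤ d) (P : GraphClass)
    (hPdeg : ∀ (V : Type) [Fintype V] (G : SimpleGraph V), P V G → DegLE G d)
    (hA : ∀ ε : ℝ, 0 < ε → ∃ r : ℕ, 1 ≤ r ∧
      ∀ (V : Type) [Fintype V] (G : SimpleGraph V), P V G → IsUniform G ε r) :
    ∀ ε' : ℝ, 0 < ε' → ∃ K : ℕ, 1 ≤ K ∧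
      ∀ (V : Type) [Fintype V] (G : SimpleGraph V), P V G →
        IsHyperfinite G ε' K := by
  intro ε' hε'
  have hd' : (0 : ℝ) < d + 1 := by positivity
  obtain ⟨r, -, hr⟩ := hA (ε' / (d + 1)) (by positivity)
  refine ⟨(d + 1) ^ r, Nat.one_le_pow _ _ (by omega), fun V _ G hPG => ?_⟩
  have hlt : ε' / (d + 1) * d < ε' := by
    rw [div_mul_eq_mul_div, div_lt_iff₀ hd']
    linarith
  obtain ⟨W, hWE, hWc, hWp⟩ := greedy G ((d + 1) ^ r) ε'
    (exists_small_boundary G d r (hPdeg V G hPG) _ ε' (by positivity) hlt (hr V G hPG))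
    Finset.univ
  refine ⟨W, hWE, by simpa [Set.ncard_coe_finset] using hWc, fun v => ?_⟩
  obtain ⟨L, hvL, hLK, hL⟩ := hWp v (Finset.mem_univ v)
  have hwalk : ∀ a b, (G.deleteEdges (W : Set (Sym2 V))).Walk a b → a ∈ L → b ∈ L := by
    intro a b p
    induction p with
    | nil => exact id
    | cons hadj _ ih =>
      intro ha
      rw [SimpleGraph.deleteEdges_adj] at hadj
      exact ih (hL _ ha _ (Finset.mem_univ _) hadj.1 (by simpa using hadj.2))
  refine le_trans ?_ hLK
  rw [← Set.ncard_coe_finset]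
  refine Set.ncard_le_ncard (fun x hx => ?_) L.finite_toSet
  have hx' : (G.deleteEdges (W : Set (Sym2 V))).Reachable x v :=
    SimpleGraph.ConnectedComponent.exact hx
  obtain ⟨p⟩ := hx'.symm
  exact hwalk _ _ p hvL

end
end

section
/- Let F be a finite simple graph and let ζ : V(F) → [0,1] be a function that is not identically zero, and let c ≥ 0 be such that ∑_{x ∈ V(F)} ∑_{y : y ∼ x} |ζ(x) − ζ(y)| ≤ c · ∑_{x ∈ V(F)} ζ(x), where the inner sum is over the neighbours y of x. Then there exists t ∈ [0,1) such that the level set Ω_t = {x ∈ V(F) : ζ(x) > t} is nonempty and |∂^e_F(Ω_t)| ≤ (c/2)·|Ω_t|. -/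
/-!
Why the theorem holds.  For `t ∈ (0, M)`, where `M = max ζ`, the level set
`Ω_t = {x | t < ζ x}` is nonempty, so if no level set had a small boundary, the function
`t ↦ |∂Ω_t| - (c/2) |Ω_t|` would be positive on `(0, M)`, and so would its integral.
The boundary is counted by ordered adjacent pairs `(x, y)` with `ζ y ≤ t < ζ x`
(`ncard_edgeBoundary_le`).  With the step function `step a t = 1[t < a]`, the indicator of
`ζ y ≤ t < ζ x` is `step (ζ x) t - step (min (ζ x) (ζ y)) t`, and `∫₀ᴹ step a = a` for `0 ≤ a ≤ M`
(`integral_step`); integrating term by term yields the area formula `∑ ζ` for `|Ω_t|` and,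
for the boundary, `∑ (ζ x - min (ζ x) (ζ y))` over ordered adjacent pairs.  By symmetry the latter
is half of `∑ |ζ x - ζ y|` (`two_mul_sum_sub_min`), which is the coarea formula.  The hypothesis then
says that the integral is at most `0`, a contradiction.
-/

open scoped Classical symmDiff

noncomputable section

/-- The indicator of `t < a`, as a function of `t`. -/
def step (a t : ℝ) : ℝ := if t < a then 1 else 0

lemma step_antitone (a : ℝ) : Antitone (step a) := by
  intro s t hst
  unfold step
  split_ifs <;> linarith

lemma step_intervalIntegrable (a M : ℝ) :
    IntervalIntegrable (step a) MeasureTheory.volume 0 M :=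
  (step_antitone a).intervalIntegrable

lemma intervalIntegrable_sum {V : Type*} [Fintype V] {g : V → ℝ → ℝ} {M : ℝ}
    (hg : ∀ x, IntervalIntegrable (g x) MeasureTheory.volume 0 M) :
    IntervalIntegrable (fun t => ∑ x, g x t) MeasureTheory.volume 0 M := by
  simpa only [Finset.sum_fn] using IntervalIntegrable.sum Finset.univ fun x _ => hg x

lemma integral_step {a M : ℝ} (ha : 0 ≤ a) (haM : a ≤ M) : ∫ t in (0 : ℝ)..M, step a t = a := by
  have hint : ∀ u v : ℝ, IntervalIntegrable (step a) MeasureTheory.volume u v :=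
    fun u v => (step_antitone a).intervalIntegrable
  rw [← intervalIntegral.integral_add_adjacent_intervals (hint 0 a) (hint a M)]
  have h1 : ∫ t in (0 : ℝ)..a, step a t = ∫ t in (0 : ℝ)..a, (1 : ℝ) := by
    apply intervalIntegral.integral_congr_Ioo_of_le ha
    intro t ht
    simp [step, ht.2]
  have h2 : ∫ t in a..M, step a t = ∫ t in a..M, (0 : ℝ) := by
    apply intervalIntegral.integral_congr
    intro t ht
    rw [Set.uIcc_of_le haM] at ht
    simp [step, not_lt.mpr ht.1]
  rw [h1, h2]
  simp

/-- The indicator of adjacency, as a real weight on ordered pairs. -/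
def adjWeight {V : Type*} (F : SimpleGraph V) (x y : V) : ℝ := if F.Adj x y then 1 else 0

lemma adjWeight_comm {V : Type*} (F : SimpleGraph V) (x y : V) :
    adjWeight F x y = adjWeight F y x := by
  simp [adjWeight, F.adj_comm]

/-- Each boundary edge of a level set comes from an ordered adjacent pair `(x, y)` with
`ζ y ≤ t < ζ x`; such pairs are counted by the right-hand side. -/
lemma ncard_edgeBoundary_le {V : Type*} [Fintype V] (F : SimpleGraph V) (ζ : V → ℝ) (t : ℝ) :
    ((edgeBoundary F {x | t < ζ x}).ncard : ℝ) ≤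
      ∑ x, ∑ y, adjWeight F x y * (step (ζ x) t - step (min (ζ x) (ζ y)) t) := by
  let P : Finset (V × V) := Finset.univ.filter fun p => F.Adj p.1 p.2 ∧ t < ζ p.1 ∧ ¬ t < ζ p.2
  have hsub : edgeBoundary F {x | t < ζ x} ⊆ ((P.image fun p => s(p.1, p.2)) : Finset (Sym2 V)) := by
    rintro e ⟨he, x, hx, y, hy, rfl⟩
    simp only [Finset.coe_image, Set.mem_image]
    exact ⟨(x, y), by simpa [P] using ⟨by simpa using he, hx, not_lt.mp hy⟩, rfl⟩
  have hcard : (edgeBoundary F {x | t < ζ x}).ncard ≤ P.card :=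
    (Set.ncard_le_ncard hsub (Finset.finite_toSet _)).trans
      (by rw [Set.ncard_coe_finset]; exact Finset.card_image_le)
  have hP : (P.card : ℝ) =
      ∑ x, ∑ y, adjWeight F x y * (step (ζ x) t - step (min (ζ x) (ζ y)) t) := by
    rw [Finset.card_filter, Nat.cast_sum, Fintype.sum_prod_type]
    refine Finset.sum_congr rfl fun x _ => Finset.sum_congr rfl fun y _ => ?_
    by_cases h1 : F.Adj x y <;> by_cases h2 : t < ζ x <;> by_cases h3 : t < ζ y <;>
      simp [adjWeight, step, h1, h2, h3]
  rw [← hP]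
  exact_mod_cast hcard

/-- `a - min a b` is the positive part of `a - b`; over a symmetric weight the positive parts of the
differences make up half of the absolute values. -/
lemma two_mul_sum_sub_min {V : Type*} [Fintype V] (F : SimpleGraph V) (ζ : V → ℝ) :
    2 * ∑ x, ∑ y, adjWeight F x y * (ζ x - min (ζ x) (ζ y)) =
      ∑ x, ∑ y, adjWeight F x y * |ζ x - ζ y| := by
  have hswap : ∑ x, ∑ y, adjWeight F x y * (ζ x - min (ζ x) (ζ y)) =
      ∑ x, ∑ y, adjWeight F x y * (ζ y - min (ζ x) (ζ y)) := by
    rw [Finset.sum_comm]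
    refine Finset.sum_congr rfl fun x _ => Finset.sum_congr rfl fun y _ => ?_
    rw [adjWeight_comm, min_comm]
  rw [two_mul]
  nth_rewrite 2 [hswap]
  simp only [← Finset.sum_add_distrib]
  refine Finset.sum_congr rfl fun x _ => Finset.sum_congr rfl fun y _ => ?_
  rw [← mul_add]
  congr 1
  rcases le_total (ζ x) (ζ y) with hxy | hxy
  · rw [min_eq_left hxy, abs_of_nonpos (by linarith)]; ring
  · rw [min_eq_right hxy, abs_of_nonneg (by linarith)]; ring

/-- Level set (co-area) argument: some level set has a small edge boundary. -/
theorem level_set_small_boundary (V : Type) [Fintype V] (F : SimpleGraph V)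
    (ζ : V → ℝ) (hζ0 : ∀ x, 0 ≤ ζ x) (hζ1 : ∀ x, ζ x ≤ 1) (hζne : ∃ x, ζ x ≠ 0)
    (c : ℝ) (hc : 0 ≤ c)
    (h : ∑ x, ∑ y ∈ (F.neighborSet x).toFinset, |ζ x - ζ y| ≤ c * ∑ x, ζ x) :
    ∃ t : ℝ, 0 ≤ t ∧ t < 1 ∧ {x | t < ζ x}.Nonempty ∧
      ((edgeBoundary F {x | t < ζ x}).ncard : ℝ) ≤
        c / 2 * (({x | t < ζ x}).ncard : ℝ) := by
  have hS : ∑ x, ∑ y ∈ (F.neighborSet x).toFinset, |ζ x - ζ y| =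
      ∑ x, ∑ y, adjWeight F x y * |ζ x - ζ y| := by
    refine Finset.sum_congr rfl fun x _ => ?_
    simp only [adjWeight, ite_mul, one_mul, zero_mul]
    rw [← Finset.sum_filter]
    refine Finset.sum_congr ?_ fun _ _ => rfl
    ext y
    simp
  obtain ⟨x₁, hx₁⟩ := hζne
  obtain ⟨m, -, hm⟩ := Finset.exists_max_image Finset.univ ζ ⟨x₁, Finset.mem_univ _⟩
  have hmax : ∀ x, ζ x ≤ ζ m := fun x => hm x (Finset.mem_univ _)
  have hM : 0 < ζ m := lt_of_lt_of_le (lt_of_le_of_ne (hζ0 x₁) hx₁.symm) (hmax x₁)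
  by_contra! hcon
  let f : ℝ → ℝ := fun t =>
    (∑ x, ∑ y, adjWeight F x y * (step (ζ x) t - step (min (ζ x) (ζ y)) t)) -
      c / 2 * ∑ x, step (ζ x) t
  have hterm : ∀ x y, IntervalIntegrable
      (fun t => adjWeight F x y * (step (ζ x) t - step (min (ζ x) (ζ y)) t))
      MeasureTheory.volume 0 (ζ m) := fun x y =>
    ((step_intervalIntegrable _ _).sub (step_intervalIntegrable _ _)).const_mul _
  have hrow : ∀ x, IntervalIntegrable
      (fun t => ∑ y, adjWeight F x y * (step (ζ x) t - step (min (ζ x) (ζ y)) t))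
      MeasureTheory.volume 0 (ζ m) := fun x => intervalIntegrable_sum fun y => hterm x y
  have hbd : IntervalIntegrable
      (fun t => ∑ x, ∑ y, adjWeight F x y * (step (ζ x) t - step (min (ζ x) (ζ y)) t))
      MeasureTheory.volume 0 (ζ m) := intervalIntegrable_sum fun x => hrow x
  have harea : IntervalIntegrable (fun t => c / 2 * ∑ x, step (ζ x) t)
      MeasureTheory.volume 0 (ζ m) :=
    (intervalIntegrable_sum fun x => step_intervalIntegrable (ζ x) _).const_mul _
  have hpos : 0 < ∫ t in (0 : ℝ)..ζ m, f t := by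
    refine intervalIntegral.intervalIntegral_pos_of_pos_on (hbd.sub harea) (fun t ht => ?_) hM
    have h1 := hcon t ht.1.le (ht.2.trans_le (hζ1 m)) ⟨m, ht.2⟩
    have h2 := ncard_edgeBoundary_le F ζ t
    have h3 : (({x | t < ζ x}).ncard : ℝ) = ∑ x, step (ζ x) t := by
      rw [Set.ncard_eq_toFinset_card']
      simp [step]
    rw [h3] at h1
    exact sub_pos.mpr (h1.trans_le h2)
  have hval : ∫ t in (0 : ℝ)..ζ m, f t =
      (∑ x, ∑ y, adjWeight F x y * (ζ x - min (ζ x) (ζ y))) - c / 2 * ∑ x, ζ x := by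
    rw [intervalIntegral.integral_sub hbd harea, intervalIntegral.integral_const_mul,
      intervalIntegral.integral_finsetSum fun x _ => hrow x,
      intervalIntegral.integral_finsetSum fun x _ => step_intervalIntegrable (ζ x) _]
    congr 1
    · refine Finset.sum_congr rfl fun x _ => ?_
      rw [intervalIntegral.integral_finsetSum fun y _ => hterm x y]
      refine Finset.sum_congr rfl fun y _ => ?_
      rw [intervalIntegral.integral_const_mul, intervalIntegral.integral_sub
        (step_intervalIntegrable _ _) (step_intervalIntegrable _ _),
        integral_step (hζ0 x) (hmax x),
        integral_step (le_min (hζ0 x) (hζ0 y)) ((min_le_left _ _).trans (hmax x))]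
    · congr 1
      exact Finset.sum_congr rfl fun x _ => integral_step (hζ0 x) (hmax x)
  have hhalf := two_mul_sum_sub_min F ζ
  rw [hS] at h
  linarith

end
end
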